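/- arXiv:1805.04677 — 2 statements merged into one kernel-verified Lean document; each statement's English description precedes it below -/
import Mathlib

section
/- Let Σ = {A, B} be any pair of 2×2 matrices all of whose entries lie in {0, 1}. Then Σ has the oligo-vertex property: there exist a real number α > 0, a real number d > 0, and a natural number k₀ such that for every integer k ≥ k₀ and every a ∈ ℝ², N_k(Σ, a) ≤ α·k^d. -/
open Matrix Set

noncomputable section

/-- `XSeq S a k` is the set of all vectors `T_{k-1} ⋯ T_0 · a` with each `T_j ∈ S`
(and `XSeq S a 0 = {a}`). -/
def XSeq {n : ℕ} (S : Set (Matrix (Fin n) (Fin n) ℝ)) (a : Fin n → ℝ) : ℕ → Set (Fin n → ℝ)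
  | 0 => {a}
  | k + 1 => ⋃ A ∈ S, A.mulVec '' XSeq S a k

/-- `PHull S a k` is the convex hull of `XSeq S a k`. -/
def PHull {n : ℕ} (S : Set (Matrix (Fin n) (Fin n) ℝ)) (a : Fin n → ℝ) (k : ℕ) :
    Set (Fin n → ℝ) :=
  convexHull ℝ (XSeq S a k)

/-- `EPts S a k` is the set of extreme points of `PHull S a k`. -/
def EPts {n : ℕ} (S : Set (Matrix (Fin n) (Fin n) ℝ)) (a : Fin n → ℝ) (k : ℕ) :
    Set (Fin n → ℝ) :=
  Set.extremePoints ℝ (PHull S a k)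

/-- `NExt S a k` is the number of extreme points of `PHull S a k`. -/
def NExt {n : ℕ} (S : Set (Matrix (Fin n) (Fin n) ℝ)) (a : Fin n → ℝ) (k : ℕ) : ℕ :=
  (EPts S a k).ncard

/-! If a matrix of the pair is singular, it maps every set into a line, whose part in the hull is
spanned by two points, so the number of vertices grows by at most two per step.

For two distinct nonsingular binary matrices and a starting vector `a ≥ 0`, the vertices of the
orbit are found among the maximizers of the functionals `c`, acting on products from the left.
When `c` has mixed signs, one of the two matrices is the best leftmost factor and moves `c` to a
known cone, which forces the optimal product up to the moment `c` leaves the mixed cones; for some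
pairs this works for all `c`. The other pairs reduce, via the coordinate swap, to two of them.
There, for `c ≤ 0`, the products that can be entrywise minimal are explicit. For `c ≥ 0`, only
products that can be entrywise maximal matter. They are continuant matrices of words in bounded
letters, since splitting a large partial quotient enlarges the product, and so does reversing the
part between two occurrences of the same ascent. Hence such words have boundedly many ascents, so
they consist of boundedly many blocks of equal letters, and there are polynomially many of them.

If the coordinates of `a` have opposite signs, then as long as the products keep the signs
opposite they follow the subtractive Euclidean algorithm up to the coordinate swap, which leaves
linearly many points. All other orbits branch off from these at a vector which is `≥ 0` or `≤ 0`.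
-/

namespace OligoVertex

open scoped Pointwise

section Hull

variable {E F : Type*} [AddCommGroup E] [Module ℝ E] [AddCommGroup F] [Module ℝ F]
  {X Y : Set E} {m n : ℕ}

/-- The convex hull of `X` is spanned by at most `n` points of `X`. For finite `X` this bounds the
number of extreme points, but unlike that number it is monotone in `n` and subadditive in `X`. -/
def HullCardLE (X : Set E) (n : ℕ) : Prop :=
  ∃ Y : Finset E, ↑Y ⊆ X ∧ X ⊆ convexHull ℝ (Y : Set E) ∧ Y.card ≤ n

lemma HullCardLE.mono (h : HullCardLE X m) (hmn : m ≤ n) : HullCardLE X n :=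
  let ⟨Y, hYX, hXY, hY⟩ := h
  ⟨Y, hYX, hXY, hY.trans hmn⟩

lemma hullCardLE_coe_finset (Y : Finset E) : HullCardLE (Y : Set E) Y.card :=
  ⟨Y, Subset.rfl, subset_convexHull ℝ _, le_rfl⟩

lemma HullCardLE.union (hX : HullCardLE X m) (hY : HullCardLE Y n) :
    HullCardLE (X ∪ Y) (m + n) := by
  classical
  obtain ⟨X', hX'X, hXX', hX'⟩ := hX
  obtain ⟨Y', hY'Y, hYY', hY'⟩ := hY
  refine ⟨X' ∪ Y', ?_, ?_, (Finset.card_union_le _ _).trans (Nat.add_le_add hX' hY')⟩ <;>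
    rw [Finset.coe_union]
  · exact union_subset_union hX'X hY'Y
  · exact union_subset (hXX'.trans (convexHull_mono subset_union_left))
      (hYY'.trans (convexHull_mono subset_union_right))

lemma HullCardLE.biUnion {ι : Type*} (s : Finset ι) {X : ι → Set E}
    (h : ∀ i ∈ s, HullCardLE (X i) n) : HullCardLE (⋃ i ∈ s, X i) (s.card * n) := by
  classical
  induction s using Finset.induction_on with
  | empty => exact ⟨∅, by simp⟩
  | insert i s hi ih =>
    rw [Finset.set_biUnion_insert, Finset.card_insert_of_notMem hi, add_comm, add_mul, one_mul]
    exact (h i (Finset.mem_insert_self i s)).union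
      (ih fun j hj => h j (Finset.mem_insert_of_mem hj))

lemma HullCardLE.image (f : E →ₗ[ℝ] F) (h : HullCardLE X n) : HullCardLE (f '' X) n := by
  classical
  obtain ⟨Y, hYX, hXY, hY⟩ := h
  refine ⟨Y.image f, ?_, ?_, Finset.card_image_le.trans hY⟩ <;> rw [Finset.coe_image]
  · exact image_mono hYX
  · rw [← f.image_convexHull]
    exact image_mono hXY

lemma HullCardLE.ncard_extremePoints_le (h : HullCardLE X n) :
    ((convexHull ℝ X).extremePoints ℝ).ncard ≤ n := by
  obtain ⟨Y, hYX, hXY, hY⟩ := h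
  have hull_eq : convexHull ℝ X = convexHull ℝ (Y : Set E) :=
    (convexHull_min hXY (convex_convexHull ℝ _)).antisymm (convexHull_mono hYX)
  rw [hull_eq]
  calc ((convexHull ℝ (Y : Set E)).extremePoints ℝ).ncard
      ≤ (Y : Set E).ncard := ncard_le_ncard extremePoints_convexHull_subset Y.finite_toSet
    _ ≤ n := (ncard_coe_finset Y).trans_le hY

lemma hullCardLE_two_of_finite {X : Set ℝ} (hX : X.Finite) : HullCardLE X 2 := by
  classical
  rcases X.eq_empty_or_nonempty with rfl | hne
  · exact ⟨∅, by simp⟩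
  obtain ⟨a, haX, ha⟩ := exists_min_image X (fun x => x) hX hne
  obtain ⟨b, hbX, hb⟩ := exists_max_image X (fun x => x) hX hne
  refine ⟨{a, b}, by simp [insert_subset_iff, haX, hbX], fun x hx => ?_, Finset.card_le_two⟩
  rw [Finset.coe_pair, convexHull_pair, segment_eq_Icc (ha b hbX)]
  exact ⟨ha x hx, hb x hx⟩

lemma subset_convexHull_of_dotProduct_le {ι : Type*} [Fintype ι] {X : Set (ι → ℝ)}
    {Y : Finset (ι → ℝ)} (h : ∀ c, ∀ x ∈ X, ∃ y ∈ Y, c ⬝ᵥ x ≤ c ⬝ᵥ y) :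
    X ⊆ convexHull ℝ (Y : Set (ι → ℝ)) := by
  classical
  intro x hx
  by_contra hxY
  obtain ⟨f, u, hfY, hfx⟩ := geometric_hahn_banach_closed_point (convex_convexHull ℝ _)
    (Y.finite_toSet.isCompact_convexHull ℝ).isClosed hxY
  obtain ⟨c, hc⟩ := (dotProductEquiv ℝ ι).surjective f.toLinearMap
  have f_eq (v : ι → ℝ) : c ⬝ᵥ v = f v := LinearMap.congr_fun hc v
  obtain ⟨y, hy, hxy⟩ := h c x hx
  rw [f_eq, f_eq] at hxy
  exact (hfx.trans_le hxy).not_gt (hfY y (subset_convexHull ℝ _ hy))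

end Hull

/-- The entrywise order on real matrices (not the Loewner order). -/
local instance entrywisePartialOrder {ι : Type*} : PartialOrder (Matrix ι ι ℝ) :=
  inferInstanceAs (PartialOrder (ι → ι → ℝ))

local instance entrywiseIsOrderedRing {ι : Type*} [Fintype ι] [DecidableEq ι] :
    IsOrderedRing (Matrix ι ι ℝ) where
  add_le_add_left _ _ h A i j := add_le_add_left (h i j) (A i j)
  zero_le_one i j := by
    rw [one_apply]
    split_ifs
    exacts [zero_le_one, le_rfl]
  mul_le_mul_of_nonneg_left _ hA _ _ h i j :=
    dotProduct_le_dotProduct_of_nonneg_left (fun k => h k j) (hA i)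
  mul_le_mul_of_nonneg_right _ hA _ _ h i _ :=
    dotProduct_le_dotProduct_of_nonneg_right (h i) (fun k => hA k _)

lemma nonneg_of_mem_pow {R : Type*} [Semiring R] [PartialOrder R] [IsOrderedRing R] {S : Set R}
    (hS : ∀ T ∈ S, 0 ≤ T) {k : ℕ} {M : R} (hM : M ∈ S ^ k) : 0 ≤ M := by
  induction k generalizing M with
  | zero =>
    rw [pow_zero, Set.mem_one] at hM
    exact hM ▸ zero_le_one
  | succ k ih =>
    rw [pow_succ] at hM
    obtain ⟨P, hP, T, hT, rfl⟩ := Set.mem_mul.1 hM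
    exact mul_nonneg (ih hP) (hS T hT)

section Order

variable {ι : Type*} [Fintype ι] {M N : Matrix ι ι ℝ} {a c : ι → ℝ}
  {S : Set (Matrix ι ι ℝ)}

lemma dotProduct_mulVec_le_of_nonneg (hMN : M ≤ N) (ha : 0 ≤ a) (hc : 0 ≤ c) :
    c ⬝ᵥ M *ᵥ a ≤ c ⬝ᵥ N *ᵥ a :=
  dotProduct_le_dotProduct_of_nonneg_left
    (fun i => dotProduct_le_dotProduct_of_nonneg_right (hMN i) ha) hc

lemma dotProduct_mulVec_le_of_nonpos (hMN : M ≤ N) (ha : 0 ≤ a) (hc : c ≤ 0) :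
    c ⬝ᵥ N *ᵥ a ≤ c ⬝ᵥ M *ᵥ a := by
  have := dotProduct_mulVec_le_of_nonneg hMN ha (neg_nonneg.2 hc)
  rwa [neg_dotProduct, neg_dotProduct, neg_le_neg_iff] at this

lemma mulVec_nonneg (hM : 0 ≤ M) (ha : 0 ≤ a) : 0 ≤ M *ᵥ a :=
  fun i => dotProduct_nonneg_of_nonneg (hM i) ha

/-- Against `c`, a product of at least two matrices from `S` does not get smaller if its first
factor is replaced by `T` and its second one is chosen suitably. -/
def IsLeading (S : Set (Matrix ι ι ℝ)) (c : ι → ℝ) (T : Matrix ι ι ℝ) : Prop :=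
  ∀ T₁ ∈ S, ∀ T₂ ∈ S, ∃ T₃ ∈ S, c ᵥ* (T₁ * T₂) ≤ c ᵥ* (T * T₃)

lemma isLeading_of_vecMul_le {T : Matrix ι ι ℝ} (hS : ∀ T ∈ S, 0 ≤ T)
    (h : ∀ T₁ ∈ S, c ᵥ* T₁ ≤ c ᵥ* T) : IsLeading S c T := by
  refine fun T₁ hT₁ T₂ hT₂ => ⟨T₂, hT₂, fun i => ?_⟩
  rw [← vecMul_vecMul, ← vecMul_vecMul]
  exact dotProduct_le_dotProduct_of_nonneg_right (h T₁ hT₁) fun j => hS T₂ hT₂ j i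

end Order

section Dominated

variable {ι : Type*} [Fintype ι] [DecidableEq ι] {S S' : Set (Matrix ι ι ℝ)}
  {C C' D : Set (ι → ℝ)} {k m n : ℕ}

/-- Some `n` products of `k` matrices from `S` suffice to maximize all the functionals
`M ↦ c ⬝ᵥ M *ᵥ a` with `c ∈ C` and `0 ≤ a` over the products of `k` matrices from `S`. The same
`n` products have to work for all `c` and `a`. -/
def DominationCardLE (S : Set (Matrix ι ι ℝ)) (C : Set (ι → ℝ)) (k n : ℕ) : Prop :=
  ∃ G : Finset (Matrix ι ι ℝ), ↑G ⊆ S ^ k ∧ G.card ≤ n ∧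
    ∀ c ∈ C, ∀ a, 0 ≤ a → ∀ M ∈ S ^ k, ∃ N ∈ G, c ⬝ᵥ M *ᵥ a ≤ c ⬝ᵥ N *ᵥ a

lemma DominationCardLE.mono (h : DominationCardLE S C k m) (hC : C' ⊆ C) (hmn : m ≤ n) :
    DominationCardLE S C' k n :=
  let ⟨G, hGS, hcard, hdom⟩ := h
  ⟨G, hGS, hcard.trans hmn, fun c hc => hdom c (hC hc)⟩

lemma DominationCardLE.union (h : DominationCardLE S C k m) (h' : DominationCardLE S C' k n) :
    DominationCardLE S (C ∪ C') k (m + n) := by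
  classical
  obtain ⟨G, hGS, hcard, hdom⟩ := h
  obtain ⟨G', hGS', hcard', hdom'⟩ := h'
  refine ⟨G ∪ G', ?_, (Finset.card_union_le _ _).trans (Nat.add_le_add hcard hcard'), ?_⟩
  · rw [Finset.coe_union]
    exact union_subset hGS hGS'
  · rintro c (hc | hc) a ha M hM
    · obtain ⟨N, hN, hle⟩ := hdom c hc a ha M hM
      exact ⟨N, Finset.mem_union_left _ hN, hle⟩
    · obtain ⟨N, hN, hle⟩ := hdom' c hc a ha M hM
      exact ⟨N, Finset.mem_union_right _ hN, hle⟩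

lemma dominationCardLE_finset_pow (S : Finset (Matrix ι ι ℝ)) :
    DominationCardLE (S : Set (Matrix ι ι ℝ)) C k (S.card ^ k) := by
  classical
  refine ⟨S ^ k, (Finset.coe_pow S k).subset, Finset.card_pow_le, fun c _ a _ M hM => ⟨M, ?_⟩⟩
  rw [← Finset.coe_pow] at hM
  exact ⟨hM, le_rfl⟩

lemma DominationCardLE.of_pow_eq {P Q : Matrix ι ι ℝ} (h : DominationCardLE S C k n)
    (hQ : 0 ≤ Q) (hpow : S' ^ k = {P} * S ^ k * {Q}) (hC : ∀ c ∈ C', c ᵥ* P ∈ C) :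
    DominationCardLE S' C' k n := by
  classical
  obtain ⟨G, hGS, hcard, hdom⟩ := h
  rw [Set.singleton_mul, Set.mul_singleton, image_image] at hpow
  refine ⟨G.image fun M => P * M * Q, ?_, Finset.card_image_le.trans hcard, ?_⟩
  · rw [Finset.coe_image, hpow]
    exact image_mono hGS
  rw [hpow]
  rintro c hc a ha _ ⟨M, hM, rfl⟩
  obtain ⟨N, hN, hle⟩ := hdom _ (hC c hc) (Q *ᵥ a) (mulVec_nonneg hQ ha) M hM
  refine ⟨_, Finset.mem_image_of_mem _ hN, ?_⟩
  simpa only [← mulVec_mulVec, dotProduct_mulVec c P] using hle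

/-- Polynomially many (in `k`) products of `k` matrices from `S` suffice to maximize all the
functionals `M ↦ c ⬝ᵥ M *ᵥ a` with `c ∈ C` and `0 ≤ a` over the products of `k` matrices. -/
def PolyDominated (S : Set (Matrix ι ι ℝ)) (C : Set (ι → ℝ)) : Prop :=
  ∃ K d : ℕ, ∀ k, DominationCardLE S C k (K * (k + 1) ^ d)

lemma PolyDominated.empty : PolyDominated S ∅ :=
  ⟨0, 0, fun _ => ⟨∅, by simp⟩⟩

lemma PolyDominated.mono (h : PolyDominated S C) (hC : C' ⊆ C) : PolyDominated S C' :=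
  let ⟨K, d, hG⟩ := h
  ⟨K, d, fun k => (hG k).mono hC le_rfl⟩

lemma PolyDominated.union (h : PolyDominated S C) (h' : PolyDominated S C') :
    PolyDominated S (C ∪ C') := by
  obtain ⟨K, d, hG⟩ := h
  obtain ⟨K', d', hG'⟩ := h'
  refine ⟨K + K', d + d', fun k => ((hG k).union (hG' k)).mono Subset.rfl ?_⟩
  rw [add_mul]
  gcongr <;> omega

lemma conj_pow_of_mul_self_eq_one {R : Type*} [Monoid R] {a : R} (ha : a * a = 1) (s : R)
    (n : ℕ) : (a * s * a) ^ n = a * s ^ n * a :=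
  Units.conj_pow ⟨a, a, ha, ha⟩ s n

lemma PolyDominated.conj_involution (h : PolyDominated S univ) {J : Matrix ι ι ℝ} (hJ : 0 ≤ J)
    (hJJ : J * J = 1) : PolyDominated ({J} * S * {J}) univ := by
  have hJJ' : ({J} : Set (Matrix ι ι ℝ)) * {J} = 1 := by
    rw [singleton_mul_singleton, hJJ, singleton_one]
  obtain ⟨K, d, hG⟩ := h
  exact ⟨K, d, fun k =>
    (hG k).of_pow_eq hJ (conj_pow_of_mul_self_eq_one hJJ' S k) fun _ _ => mem_univ _⟩

lemma PolyDominated.mul_singleton (h : PolyDominated S univ) {J : Matrix ι ι ℝ} (hJ : 0 ≤ J)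
    (hcomm : Commute S {J}) : PolyDominated (S * {J}) univ := by
  obtain ⟨K, d, hG⟩ := h
  refine ⟨K, d, fun k => (hG k).of_pow_eq (P := 1) (pow_nonneg hJ k) ?_ fun _ _ => mem_univ _⟩
  rw [hcomm.mul_pow, Set.singleton_pow, singleton_one, one_mul]

lemma exists_pow_eq_of_mem_pow {R : Type*} [Monoid R] {S : Set R} {T : R} (hS : S ⊆ {1, T}) {M : R}
    (hM : M ∈ S ^ k) : ∃ j ≤ k, T ^ j = M := by
  induction k generalizing M with
  | zero => exact ⟨0, le_rfl, (pow_zero T).trans hM.symm⟩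
  | succ k ih =>
    obtain ⟨M, hM, N, hN, rfl⟩ := hM
    obtain ⟨j, hj, rfl⟩ := ih hM
    rcases hS hN with rfl | rfl
    exacts [⟨j, hj.trans k.le_succ, (mul_one _).symm⟩, ⟨j + 1, Nat.succ_le_succ hj, pow_succ _ _⟩]

lemma polyDominated_of_subset_one_pair {T : Matrix ι ι ℝ} (hS : S ⊆ {1, T}) :
    PolyDominated S univ := by
  classical
  refine ⟨1, 1, fun k => ⟨((Finset.range (k + 1)).image (T ^ ·)).filter (· ∈ S ^ k),
    fun M hM => (Finset.mem_filter.1 hM).2, ?_, fun c _ a _ M hM => ⟨M, ?_, le_rfl⟩⟩⟩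
  · calc _ ≤ ((Finset.range (k + 1)).image (T ^ ·)).card := Finset.card_filter_le _ _
      _ ≤ (Finset.range (k + 1)).card := Finset.card_image_le
      _ = 1 * (k + 1) ^ 1 := by rw [Finset.card_range, one_mul, pow_one]
  · obtain ⟨j, hj, rfl⟩ := exists_pow_eq_of_mem_pow hS hM
    exact Finset.mem_filter.2
      ⟨Finset.mem_image_of_mem _ (Finset.mem_range_succ_iff.2 hj), hM⟩

lemma DominationCardLE.of_isLeading (h : DominationCardLE S C (k + 1) n) (hS : ∀ T ∈ S, 0 ≤ T)
    {T : Matrix ι ι ℝ} (hT : T ∈ S) (hlead : ∀ c ∈ C', IsLeading S c T)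
    (hC : ∀ c ∈ C', c ᵥ* T ∈ C) : DominationCardLE S C' (k + 2) n := by
  classical
  obtain ⟨G, hGS, hcard, hdom⟩ := h
  refine ⟨G.image (T * ·), ?_, Finset.card_image_le.trans hcard, fun c hc a ha M hM => ?_⟩
  · rw [Finset.coe_image, pow_succ' S (k + 1)]
    rintro _ ⟨N, hN, rfl⟩
    exact mul_mem_mul hT (hGS hN)
  rw [pow_succ', pow_succ'] at hM
  obtain ⟨T₁, hT₁, _, ⟨T₂, hT₂, M, hM, rfl⟩, rfl⟩ := hM
  obtain ⟨T₃, hT₃, hle⟩ := hlead c hc T₁ hT₁ T₂ hT₂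
  obtain ⟨N, hN, hMN⟩ := hdom _ (hC c hc) a ha (T₃ * M) (pow_succ' S k ▸ mul_mem_mul hT₃ hM)
  refine ⟨_, Finset.mem_image_of_mem _ hN, ?_⟩
  calc c ⬝ᵥ (T₁ * (T₂ * M)) *ᵥ a = c ᵥ* (T₁ * T₂) ⬝ᵥ M *ᵥ a := by
        rw [← dotProduct_mulVec, mulVec_mulVec, mul_assoc]
    _ ≤ c ᵥ* (T * T₃) ⬝ᵥ M *ᵥ a :=
        dotProduct_le_dotProduct_of_nonneg_right hle (mulVec_nonneg (nonneg_of_mem_pow hS hM) ha)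
    _ = c ᵥ* T ⬝ᵥ (T₃ * M) *ᵥ a := by
        rw [← dotProduct_mulVec, ← dotProduct_mulVec, mulVec_mulVec, mulVec_mulVec, mul_assoc]
    _ ≤ c ᵥ* T ⬝ᵥ N *ᵥ a := hMN
    _ = c ⬝ᵥ (T * N) *ᵥ a := by rw [← dotProduct_mulVec, mulVec_mulVec]

/-- If the leading matrix is determined on each cone of a family and maps it into another cone of
the family, then the best product follows these choices until its functional enters `D`. -/
lemma PolyDominated.of_isLeading (hSfin : S.Finite) (hS : ∀ T ∈ S, 0 ≤ T) (hD : PolyDominated S D)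
    {κ : Type*} {C : κ → Set (ι → ℝ)} (T : κ → Matrix ι ι ℝ) (next : κ → κ) (hT : ∀ i, T i ∈ S)
    (hlead : ∀ i, ∀ c ∈ C i, IsLeading S c (T i))
    (hnext : ∀ i, ∀ c ∈ C i, c ᵥ* T i ∈ C (next i) ∪ D) (i : κ) : PolyDominated S (C i) := by
  lift S to Finset (Matrix ι ι ℝ) using hSfin
  obtain ⟨K, d, hD⟩ := hD
  have growth (k : ℕ) : (K + S.card + 1) * (k + 2) ^ (d + 1) + K * (k + 1 + 1) ^ d ≤
      (K + S.card + 1) * (k + 3) ^ (d + 1) :=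
    calc (K + S.card + 1) * (k + 2) ^ (d + 1) + K * (k + 2) ^ d
        ≤ (K + S.card + 1) * (k + 2) ^ (d + 1) + (K + S.card + 1) * (k + 2) ^ d := by
          gcongr; omega
      _ = (K + S.card + 1) * ((k + 2) ^ d * (k + 3)) := by ring
      _ ≤ (K + S.card + 1) * (k + 3) ^ (d + 1) := by rw [pow_succ (k + 3)]; gcongr; omega
  refine ⟨K + S.card + 1, d + 1, fun k => ?_⟩
  induction k using Nat.twoStepInduction generalizing i with
  | zero => exact (dominationCardLE_finset_pow S).mono Subset.rfl (by simp)
  | one =>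
    refine (dominationCardLE_finset_pow S).mono Subset.rfl ?_
    calc S.card ^ 1 ≤ (K + S.card + 1) * 1 := by rw [pow_one, mul_one]; omega
      _ ≤ (K + S.card + 1) * (1 + 1) ^ (d + 1) := by gcongr; exact Nat.one_le_two_pow
  | more k _ ih =>
    exact (((ih (next i)).union (hD (k + 1))).of_isLeading hS (hT i) (hlead i) (hnext i)).mono
      Subset.rfl (growth k)

end Dominated

/-! ### The nonsingular binary matrices -/

/-- The coordinate swap. -/
def J : Matrix (Fin 2) (Fin 2) ℝ := !![0, 1; 1, 0]

/-- The upper unitriangular binary matrix. -/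
def U : Matrix (Fin 2) (Fin 2) ℝ := !![1, 1; 0, 1]

/-- The lower unitriangular binary matrix. -/
def L : Matrix (Fin 2) (Fin 2) ℝ := !![1, 0; 1, 1]

/-- The matrix `U` with its columns swapped. -/
def F : Matrix (Fin 2) (Fin 2) ℝ := !![1, 1; 1, 0]

/-- The matrix `L` with its columns swapped. -/
def G : Matrix (Fin 2) (Fin 2) ℝ := !![0, 1; 1, 1]

lemma J_mul_J : J * J = 1 := by simp [J, one_fin_two]
lemma U_mul_J : U * J = F := by simp [U, J, F]
lemma J_mul_L : J * L = F := by simp [J, L, F]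
lemma L_mul_J : L * J = G := by simp [L, J, G]
lemma J_mul_U : J * U = G := by simp [J, U, G]
lemma J_mul_U_mul_J : J * U * J = L := by simp [J, U, L]
lemma J_mul_F_mul_J : J * F * J = G := by simp [J, F, G]
lemma J_mul_G_mul_J : J * G * J = F := by simp [J, F, G]

lemma matrix_le_iff {M N : Matrix (Fin 2) (Fin 2) ℝ} :
    M ≤ N ↔ (M 0 0 ≤ N 0 0 ∧ M 0 1 ≤ N 0 1) ∧ M 1 0 ≤ N 1 0 ∧ M 1 1 ≤ N 1 1 := by
  change (∀ i j, M i j ≤ N i j) ↔ _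
  simp only [Fin.forall_fin_two]

lemma J_nonneg : 0 ≤ J := by simp [matrix_le_iff, J]
lemma U_nonneg : 0 ≤ U := by simp [matrix_le_iff, U]
lemma L_nonneg : 0 ≤ L := by simp [matrix_le_iff, L]
lemma F_nonneg : 0 ≤ F := by simp [matrix_le_iff, F]
lemma G_nonneg : 0 ≤ G := by simp [matrix_le_iff, G]

section Cones

variable {c : Fin 2 → ℝ} {S : Set (Matrix (Fin 2) (Fin 2) ℝ)} {A B : Matrix (Fin 2) (Fin 2) ℝ}

@[simp, grind =] lemma vecMul_J_zero : (c ᵥ* J) 0 = c 1 := by simp [J, vecMul, dotProduct]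
@[simp, grind =] lemma vecMul_J_one : (c ᵥ* J) 1 = c 0 := by simp [J, vecMul, dotProduct]
@[simp, grind =] lemma vecMul_U_zero : (c ᵥ* U) 0 = c 0 := by simp [U, vecMul, dotProduct]
@[simp, grind =] lemma vecMul_U_one : (c ᵥ* U) 1 = c 0 + c 1 := by simp [U, vecMul, dotProduct]
@[simp, grind =] lemma vecMul_L_zero : (c ᵥ* L) 0 = c 0 + c 1 := by simp [L, vecMul, dotProduct]
@[simp, grind =] lemma vecMul_L_one : (c ᵥ* L) 1 = c 1 := by simp [L, vecMul, dotProduct]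
@[simp, grind =] lemma vecMul_F_zero : (c ᵥ* F) 0 = c 0 + c 1 := by simp [F, vecMul, dotProduct]
@[simp, grind =] lemma vecMul_F_one : (c ᵥ* F) 1 = c 0 := by simp [F, vecMul, dotProduct]
@[simp, grind =] lemma vecMul_G_zero : (c ᵥ* G) 0 = c 1 := by simp [G, vecMul, dotProduct]
@[simp, grind =] lemma vecMul_G_one : (c ᵥ* G) 1 = c 0 + c 1 := by simp [G, vecMul, dotProduct]

@[grind =] lemma le_iff_fin_two {v w : Fin 2 → ℝ} : v ≤ w ↔ v 0 ≤ w 0 ∧ v 1 ≤ w 1 :=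
  Fin.forall_fin_two

@[grind =] lemma nonneg_iff_fin_two {v : Fin 2 → ℝ} : 0 ≤ v ↔ 0 ≤ v 0 ∧ 0 ≤ v 1 := le_iff_fin_two

@[grind =] lemma nonpos_iff_fin_two {v : Fin 2 → ℝ} : v ≤ 0 ↔ v 0 ≤ 0 ∧ v 1 ≤ 0 := le_iff_fin_two

/-- The functionals that are nonnegative on the first and nonpositive on the second axis. -/
def fourthQuadrant : Set (Fin 2 → ℝ) := {c | 0 ≤ c 0 ∧ c 1 ≤ 0}

/-- The functionals that are nonpositive on the first and nonnegative on the second axis. -/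
def secondQuadrant : Set (Fin 2 → ℝ) := {c | c 0 ≤ 0 ∧ 0 ≤ c 1}

@[grind =] lemma mem_fourthQuadrant : c ∈ fourthQuadrant ↔ 0 ≤ c 0 ∧ c 1 ≤ 0 := Iff.rfl

@[grind =] lemma mem_secondQuadrant : c ∈ secondQuadrant ↔ c 0 ≤ 0 ∧ 0 ≤ c 1 := Iff.rfl

lemma PolyDominated.of_quadrants (pos : PolyDominated S (Ici 0)) (neg : PolyDominated S (Iic 0))
    (fourth : PolyDominated S fourthQuadrant) (second : PolyDominated S secondQuadrant) :
    PolyDominated S univ := by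
  refine ((pos.union neg).union (fourth.union second)).mono fun c _ => ?_
  grind

lemma forall_mem_pair_nonneg (hA : 0 ≤ A) (hB : 0 ≤ B) :
    ∀ T ∈ ({A, B} : Set (Matrix (Fin 2) (Fin 2) ℝ)), 0 ≤ T := by
  rintro T (rfl | rfl)
  exacts [hA, hB]

lemma isLeading_pair_left (hA : 0 ≤ A) (hB : 0 ≤ B) (h : c ᵥ* B ≤ c ᵥ* A) :
    IsLeading {A, B} c A := by
  refine isLeading_of_vecMul_le (forall_mem_pair_nonneg hA hB) ?_
  rintro T (rfl | rfl)
  exacts [le_rfl, h]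

lemma isLeading_pair_right (hA : 0 ≤ A) (hB : 0 ≤ B) (h : c ᵥ* A ≤ c ᵥ* B) :
    IsLeading {A, B} c B :=
  pair_comm B A ▸ isLeading_pair_left hB hA h

lemma isLeading_pair_left_of_two_steps {T T' : Matrix (Fin 2) (Fin 2) ℝ}
    (hT : T ∈ ({A, B} : Set _)) (hT' : T' ∈ ({A, B} : Set _))
    (hA : c ᵥ* B ᵥ* A ≤ c ᵥ* A ᵥ* T) (hB : c ᵥ* B ᵥ* B ≤ c ᵥ* A ᵥ* T') :
    IsLeading {A, B} c A := by
  simp only [vecMul_vecMul] at hA hB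
  rintro _ (rfl | rfl) T₂ hT₂
  · exact ⟨T₂, hT₂, le_rfl⟩
  · rcases hT₂ with rfl | rfl
    exacts [⟨T, hT, hA⟩, ⟨T', hT', hB⟩]

lemma PolyDominated.of_isLeading_left {C D : Set (Fin 2 → ℝ)} (hA : 0 ≤ A) (hB : 0 ≤ B)
    (hD : PolyDominated {A, B} D)
    (h : ∀ c ∈ C, IsLeading {A, B} c A ∧ c ᵥ* A ∈ C ∪ D) : PolyDominated {A, B} C :=
  PolyDominated.of_isLeading (κ := Unit) (C := fun _ => C) (toFinite _)
    (forall_mem_pair_nonneg hA hB) hD (fun _ => A) id (fun _ => mem_insert _ _)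
    (fun _ c hc => (h c hc).1) (fun _ c hc => (h c hc).2) ()

lemma PolyDominated.of_isLeading_right {C D : Set (Fin 2 → ℝ)} (hA : 0 ≤ A) (hB : 0 ≤ B)
    (hD : PolyDominated {A, B} D)
    (h : ∀ c ∈ C, IsLeading {A, B} c B ∧ c ᵥ* B ∈ C ∪ D) : PolyDominated {A, B} C := by
  rw [pair_comm] at hD ⊢
  exact hD.of_isLeading_left hB hA fun c hc => pair_comm A B ▸ h c hc

end Cones

/-! ### Pairs with a leading matrix on every cone -/

section Cones

variable {c : Fin 2 → ℝ}

lemma isLeading_UG_U (h : c 1 ≤ c 0) : IsLeading {U, G} c U :=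
  isLeading_pair_left U_nonneg G_nonneg (by grind)

lemma isLeading_UG_G (h : c 0 ≤ c 1) : IsLeading {U, G} c G :=
  isLeading_pair_right U_nonneg G_nonneg (by grind)

lemma isLeading_JF_J (h : c 0 ≤ 0) : IsLeading {J, F} c J :=
  isLeading_pair_left J_nonneg F_nonneg (by grind)

lemma isLeading_JF_F (h : 0 ≤ c 0) : IsLeading {J, F} c F :=
  isLeading_pair_right J_nonneg F_nonneg (by grind)

lemma isLeading_UF_U (h : c 1 ≤ 0) : IsLeading {U, F} c U :=
  isLeading_pair_left_of_two_steps (T := U) (T' := F) (by simp) (by simp)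
    (by grind) (by grind)

lemma isLeading_UF_F (h : 0 ≤ c 1) : IsLeading {U, F} c F :=
  pair_comm F U ▸ isLeading_pair_left_of_two_steps (T := F) (T' := U) (by simp) (by simp)
    (by grind) (by grind)

lemma isLeading_UL_U (h : c ∈ fourthQuadrant) : IsLeading {U, L} c U :=
  isLeading_pair_left U_nonneg L_nonneg (by grind)

lemma isLeading_UL_L (h : c ∈ secondQuadrant) : IsLeading {U, L} c L :=
  isLeading_pair_right U_nonneg L_nonneg (by grind)

lemma isLeading_JU_U (h : c ∈ fourthQuadrant) : IsLeading {J, U} c U :=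
  pair_comm U J ▸ isLeading_pair_left_of_two_steps (T := U) (T' := U) (by simp) (by simp)
    (by grind) (by grind)

lemma isLeading_JU_J (h : c ∈ secondQuadrant) : IsLeading {J, U} c J :=
  isLeading_pair_left_of_two_steps (T := U) (T' := U) (by simp) (by simp)
    (by grind) (by grind)

lemma polyDominated_UG : PolyDominated {U, G} univ := by
  have pos_le : PolyDominated {U, G} {c | 0 ≤ c 0 ∧ c 0 ≤ c 1} :=
    PolyDominated.empty.of_isLeading_right U_nonneg G_nonneg fun c hc =>
      ⟨isLeading_UG_G hc.2, by grind⟩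
  have pos_ge : PolyDominated {U, G} {c | 0 ≤ c 1 ∧ c 1 ≤ c 0} :=
    pos_le.of_isLeading_left U_nonneg G_nonneg fun c hc => ⟨isLeading_UG_U hc.2, by grind⟩
  have pos : PolyDominated {U, G} (Ici 0) :=
    (pos_le.union pos_ge).mono fun c => by grind
  have neg_ge : PolyDominated {U, G} {c | c 1 ≤ c 0 ∧ c 0 ≤ 0} :=
    PolyDominated.empty.of_isLeading_left U_nonneg G_nonneg fun c hc =>
      ⟨isLeading_UG_U hc.1, by grind⟩
  have neg_le : PolyDominated {U, G} {c | c 0 ≤ c 1 ∧ c 1 ≤ 0} :=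
    neg_ge.of_isLeading_right U_nonneg G_nonneg fun c hc => ⟨isLeading_UG_G hc.1, by grind⟩
  have neg : PolyDominated {U, G} (Iic 0) :=
    (neg_ge.union neg_le).mono fun c => by grind
  have fourth : PolyDominated {U, G} fourthQuadrant :=
    pos.of_isLeading_left U_nonneg G_nonneg fun c hc =>
      ⟨isLeading_UG_U (by grind), by grind⟩
  exact .of_quadrants pos neg fourth <|
    (fourth.union pos).of_isLeading_right U_nonneg G_nonneg fun c hc =>
      ⟨isLeading_UG_G (by grind), by grind⟩

lemma polyDominated_UF : PolyDominated {U, F} univ := by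
  have pos : PolyDominated {U, F} (Ici 0) :=
    PolyDominated.empty.of_isLeading_right U_nonneg F_nonneg fun c hc =>
      ⟨isLeading_UF_F (hc 1), by grind⟩
  have neg : PolyDominated {U, F} (Iic 0) :=
    PolyDominated.empty.of_isLeading_left U_nonneg F_nonneg fun c hc =>
      ⟨isLeading_UF_U (hc 1), by grind⟩
  have fourth : PolyDominated {U, F} fourthQuadrant :=
    pos.of_isLeading_left U_nonneg F_nonneg fun c hc =>
      ⟨isLeading_UF_U hc.2, by grind⟩
  exact .of_quadrants pos neg fourth <|
    (fourth.union neg).of_isLeading_right U_nonneg F_nonneg fun c hc =>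
      ⟨isLeading_UF_F hc.2, by grind⟩

lemma polyDominated_JF : PolyDominated {J, F} univ := by
  have pos : PolyDominated {J, F} (Ici 0) :=
    PolyDominated.empty.of_isLeading_right J_nonneg F_nonneg fun c hc =>
      ⟨isLeading_JF_F (hc 0), by grind⟩
  have neg : PolyDominated {J, F} (Iic 0) :=
    PolyDominated.empty.of_isLeading_left J_nonneg F_nonneg fun c hc =>
      ⟨isLeading_JF_J (hc 0), by grind⟩
  have mixed (b : Bool) : PolyDominated {J, F} (cond b fourthQuadrant secondQuadrant) := by
    refine pos.of_isLeading (C := fun b => cond b fourthQuadrant secondQuadrant) (toFinite _)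
      (forall_mem_pair_nonneg J_nonneg F_nonneg) (fun b => cond b F J) not ?_ ?_ ?_ b <;>
    rintro (_ | _)
    · exact mem_insert _ _
    · exact mem_insert_of_mem _ rfl
    · exact fun c hc => isLeading_JF_J hc.1
    · exact fun c hc => isLeading_JF_F hc.1
    · exact fun c hc => Or.inl (by grind : c ᵥ* J ∈ fourthQuadrant)
    · exact fun c hc => (by grind : c ᵥ* F ∈ secondQuadrant ∪ Ici 0)
  exact .of_quadrants pos neg (mixed true) (mixed false)

lemma PolyDominated.univ_of_UL (pos : PolyDominated {U, L} (Ici 0))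
    (neg : PolyDominated {U, L} (Iic 0)) : PolyDominated {U, L} univ := by
  refine .of_quadrants pos neg ?_ ?_
  · exact pos.of_isLeading_left U_nonneg L_nonneg fun c hc =>
      ⟨isLeading_UL_U hc, by grind⟩
  · exact pos.of_isLeading_right U_nonneg L_nonneg fun c hc =>
      ⟨isLeading_UL_L hc, by grind⟩

lemma PolyDominated.univ_of_JU (pos : PolyDominated {J, U} (Ici 0))
    (neg : PolyDominated {J, U} (Iic 0)) : PolyDominated {J, U} univ := by
  have fourth : PolyDominated {J, U} fourthQuadrant :=
    pos.of_isLeading_right J_nonneg U_nonneg fun c hc =>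
      ⟨isLeading_JU_U hc, by grind⟩
  exact .of_quadrants pos neg fourth <| fourth.of_isLeading_left J_nonneg U_nonneg fun c hc =>
    ⟨isLeading_JU_J hc, by grind⟩

end Cones

/-! ### Nonpositive functionals -/

lemma U_pow (n : ℕ) : U ^ n = !![1, (n : ℝ); 0, 1] := by
  induction n with
  | zero => simp [one_fin_two]
  | succ n ih => rw [pow_succ, ih]; simp [U, add_comm]

lemma L_pow (n : ℕ) : L ^ n = !![1, 0; (n : ℝ), 1] := by
  induction n with
  | zero => simp [one_fin_two]
  | succ n ih => rw [pow_succ, ih]; simp [L]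

lemma dotProduct_mulVec_fin_two (a c : Fin 2 → ℝ) (p q r s : ℝ) :
    c ⬝ᵥ !![p, q; r, s] *ᵥ a = c 0 * (p * a 0 + q * a 1) + c 1 * (r * a 0 + s * a 1) := by
  simp [mulVec, dotProduct]

lemma exists_unipotent_le_of_mem_UL_pow {k : ℕ} {M : Matrix (Fin 2) (Fin 2) ℝ}
    (hM : M ∈ ({U, L} : Set (Matrix (Fin 2) (Fin 2) ℝ)) ^ k) :
    ∃ p q : ℕ, p + q = k ∧ !![1, (p : ℝ); (q : ℝ), 1] ≤ M := by
  induction k generalizing M with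
  | zero =>
    obtain rfl : M = 1 := hM
    exact ⟨0, 0, rfl, by simp [matrix_le_iff]⟩
  | succ k ih =>
    obtain ⟨M, hM, T, hT, rfl⟩ := hM
    obtain ⟨p, q, rfl, hle⟩ := ih hM
    rcases hT with rfl | rfl
    · refine ⟨p + 1, q, by omega, le_trans ?_ (mul_le_mul_of_nonneg_right hle U_nonneg)⟩
      simp [matrix_le_iff, U, add_comm]
    · refine ⟨p, q + 1, by omega, le_trans ?_ (mul_le_mul_of_nonneg_right hle L_nonneg)⟩
      simp [matrix_le_iff, L]

lemma polyDominated_UL_Iic : PolyDominated {U, L} (Iic 0) := by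
  classical
  refine ⟨2, 0, fun k => ⟨{U ^ k, L ^ k}, ?_, by simpa using Finset.card_le_two, ?_⟩⟩
  · simp [insert_subset_iff, Set.pow_mem_pow]
  intro c hc a ha M hM
  obtain ⟨p, q, rfl, hle⟩ := exists_unipotent_le_of_mem_UL_pow hM
  have le_upper := dotProduct_mulVec_le_of_nonpos hle ha hc
  rcases le_total (c 1 * a 0) (c 0 * a 1) with h | h
  · refine ⟨_, Finset.mem_insert_self _ _, le_upper.trans ?_⟩
    have := mul_le_mul_of_nonneg_left h q.cast_nonneg
    rw [U_pow, dotProduct_mulVec_fin_two, dotProduct_mulVec_fin_two]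
    push_cast
    linarith
  · refine ⟨_, Finset.mem_insert_of_mem (Finset.mem_singleton_self _), le_upper.trans ?_⟩
    have := mul_le_mul_of_nonneg_left h p.cast_nonneg
    rw [L_pow, dotProduct_mulVec_fin_two, dotProduct_mulVec_fin_two]
    push_cast
    linarith

lemma exists_single_switch_le_of_mem_pow {R : Type*} [Semiring R] [PartialOrder R]
    [IsOrderedRing R] {P T M : R} (hP : 0 ≤ P) (hPP : P * P = 1) (hT : 1 ≤ T) {k : ℕ}
    (hM : M ∈ ({P, T} : Set R) ^ k) :
    P ^ k ≤ M ∨ ∃ i j, i + j + 1 = k ∧ P ^ i * T * P ^ j ≤ M := by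
  induction k generalizing M with
  | zero => exact Or.inl ((pow_zero P).trans_le hM.ge)
  | succ k ih =>
    rw [pow_succ'] at hM
    obtain ⟨X, hX, M, hM, rfl⟩ := hM
    have hT₀ : 0 ≤ T := zero_le_one.trans hT
    rcases hX with rfl | rfl <;> rcases ih hM with hle | ⟨i, j, rfl, hle⟩
    · exact Or.inl (pow_succ' X k ▸ mul_le_mul_of_nonneg_left hle hP)
    · refine Or.inr ⟨i + 1, j, by omega, ?_⟩
      rw [pow_succ', mul_assoc, mul_assoc, ← mul_assoc (X ^ i)]
      exact mul_le_mul_of_nonneg_left hle hP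
    · refine Or.inr ⟨0, k, by omega, ?_⟩
      rw [pow_zero, one_mul]
      exact mul_le_mul_of_nonneg_left hle hT₀
    · left
      calc P ^ (i + j + 1 + 1) = 1 * (P ^ i * 1 * P ^ j) := by
            rw [add_assoc (i + j), pow_add, pow_two, hPP, mul_one, mul_one, one_mul, pow_add]
        _ ≤ X * (P ^ i * X * P ^ j) :=
            mul_le_mul hT (mul_le_mul_of_nonneg_right (mul_le_mul_of_nonneg_left hT
              (pow_nonneg hP i)) (pow_nonneg hP j))
              (mul_nonneg (mul_nonneg (pow_nonneg hP i) zero_le_one) (pow_nonneg hP j)) hT₀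
        _ ≤ X * M := mul_le_mul_of_nonneg_left hle hT₀

lemma polyDominated_Iic_of_involution {ι : Type*} [Fintype ι] [DecidableEq ι]
    {P T : Matrix ι ι ℝ} (hP : 0 ≤ P) (hPP : P * P = 1) (hT : 1 ≤ T) :
    PolyDominated {P, T} (Iic 0) := by
  classical
  refine ⟨1, 1, fun k => ⟨insert (P ^ k)
    ((Finset.range k).image fun i => P ^ i * T * P ^ (k - 1 - i)), ?_, ?_, ?_⟩⟩
  · rw [Finset.coe_insert, Finset.coe_image, insert_subset_iff]
    refine ⟨Set.pow_mem_pow (mem_insert _ _), ?_⟩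
    rintro _ ⟨i, hi, rfl⟩
    have split : k = i + 1 + (k - 1 - i) := by grind
    rw [split, pow_add, pow_succ, ← split]
    exact mul_mem_mul (mul_mem_mul (Set.pow_mem_pow (mem_insert _ _)) (mem_insert_of_mem _ rfl))
      (Set.pow_mem_pow (mem_insert _ _))
  · calc _ ≤ _ + 1 := Finset.card_insert_le _ _
      _ ≤ k + 1 := by gcongr; simpa using Finset.card_image_le (s := Finset.range k)
      _ = 1 * (k + 1) ^ 1 := by rw [one_mul, pow_one]
  intro c hc a ha M hM
  rcases exists_single_switch_le_of_mem_pow hP hPP hT hM with hle | ⟨i, j, rfl, hle⟩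
  · exact ⟨_, Finset.mem_insert_self _ _, dotProduct_mulVec_le_of_nonpos hle ha hc⟩
  · refine ⟨_, Finset.mem_insert_of_mem (Finset.mem_image.2 ⟨i, by grind, ?_⟩),
      dotProduct_mulVec_le_of_nonpos hle ha hc⟩
    rw [show i + j + 1 - 1 - i = j by omega]

/-! ### Continuant matrices -/

/-- The matrix of continuants of `l`, the convergent matrix of the continued fraction with partial
quotients `l`. -/
def contMat (l : List ℕ) : Matrix (Fin 2) (Fin 2) ℝ :=
  (l.map fun n : ℕ => !![(n : ℝ), 1; 1, 0]).prod

lemma contMat_nil : contMat [] = 1 := rfl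

lemma contMat_cons (n : ℕ) (l : List ℕ) : contMat (n :: l) = !![(n : ℝ), 1; 1, 0] * contMat l :=
  List.prod_cons

lemma contMat_append (l₁ l₂ : List ℕ) : contMat (l₁ ++ l₂) = contMat l₁ * contMat l₂ := by
  rw [contMat, List.map_append, List.prod_append, contMat, contMat]

lemma contMat_reverse (l : List ℕ) : contMat l.reverse = (contMat l)ᵀ := by
  have symm (n : ℕ) : !![(n : ℝ), 1; 1, 0]ᵀ = !![(n : ℝ), 1; 1, 0] := by
    ext i j; fin_cases i <;> fin_cases j <;> rfl
  rw [contMat, contMat, transpose_list_prod, List.map_map, List.map_reverse]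
  simp only [Function.comp_def, symm]

lemma contMat_nonneg (l : List ℕ) : 0 ≤ contMat l := by
  induction l with
  | nil => exact zero_le_one
  | cons n l ih =>
    rw [contMat_cons]
    exact mul_nonneg (by simp [matrix_le_iff]) ih

lemma isUnit_contMat (l : List ℕ) : IsUnit (contMat l) := by
  refine List.prod_isUnit fun M hM => ?_
  obtain ⟨n, -, rfl⟩ := List.mem_map.1 hM
  simp [isUnit_iff_isUnit_det]

lemma contMat_bounds_of_pos {l : List ℕ} (hl : ∀ x ∈ l, 0 < x) :
    0 < contMat l 0 0 ∧ contMat l 0 1 ≤ contMat l 0 0 ∧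
      contMat l 0 1 + contMat l 1 1 ≤ contMat l 0 0 + contMat l 1 0 ∧
      contMat l 0 1 < contMat l 0 0 + contMat l 1 0 := by
  induction l with
  | nil => simp [contMat_nil]
  | cons n l ih =>
    obtain ⟨h₀₀, hrow, hcol, -⟩ := ih fun x hx => hl x (List.mem_cons_of_mem n hx)
    have h₁₀ : 0 ≤ contMat l 1 0 := contMat_nonneg l 1 0
    have hn : (1 : ℝ) ≤ n := by exact_mod_cast hl n List.mem_cons_self
    have hmul := mul_le_mul_of_nonneg_left hrow (sub_nonneg.2 hn)
    have hpos := mul_pos (zero_lt_one.trans_le hn) h₀₀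
    simp only [contMat_cons, mul_apply, Fin.sum_univ_two, of_apply, cons_val', cons_val_zero,
      cons_val_one, cons_val_fin_one, one_mul, zero_mul, add_zero]
    refine ⟨?_, ?_, ?_, ?_⟩ <;> linarith

lemma contMat_reverse_sub (l : List ℕ) :
    contMat l.reverse - contMat l = (contMat l 0 1 - contMat l 1 0) • !![0, -1; 1, 0] := by
  rw [contMat_reverse]
  ext i j
  fin_cases i <;> fin_cases j <;> simp

lemma contMat_ends_zero_one_sub (l : List ℕ) (α β : ℕ) :
    contMat (β :: l ++ [α]) 0 1 - contMat (β :: l ++ [α]) 1 0 =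
      (β - α) * contMat l 0 0 + contMat l 1 0 - contMat l 0 1 := by
  simp [contMat_append, contMat_cons, contMat_nil, mul_apply]
  ring

/-- Reversing the part between two occurrences of the ascent `α β` enlarges the product, because
the skew-symmetric difference of the two middle factors has a positive coefficient. -/
lemma contMat_lt_contMat_reverse {z α β : ℕ} {l : List ℕ} (hz : 0 < z) (hαβ : α < β)
    (hl : ∀ x ∈ l, 0 < x) :
    contMat ([z, α] ++ (β :: l ++ [α]) ++ [β]) <
      contMat ([z, α] ++ (β :: l ++ [α]).reverse ++ [β]) := by
  have hz' : (1 : ℝ) ≤ z := by exact_mod_cast hz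
  have hβα : (1 : ℝ) ≤ β - α := by
    rw [le_sub_iff_add_le']
    exact_mod_cast hαβ
  set δ := contMat (β :: l ++ [α]) 0 1 - contMat (β :: l ++ [α]) 1 0 with hδ
  have δ_pos : 0 < δ := by
    obtain ⟨h₀₀, -, -, hlt⟩ := contMat_bounds_of_pos hl
    have := mul_le_mul_of_nonneg_right hβα h₀₀.le
    rw [hδ, contMat_ends_zero_one_sub]
    linarith
  have ends : contMat [z, α] * !![0, -1; 1, 0] * contMat [β] =
      !![(z : ℝ) * (β - α) - 1, z; β - α, 1] := by
    simp only [contMat_cons, contMat_nil, mul_one, mul_fin_two]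
    ring_nf
  have diff :
      contMat ([z, α] ++ (β :: l ++ [α]).reverse ++ [β]) -
        contMat ([z, α] ++ (β :: l ++ [α]) ++ [β]) =
      δ • !![(z : ℝ) * (β - α) - 1, z; β - α, 1] := by
    simp only [contMat_append [z, α], contMat_append _ [β]]
    rw [← sub_mul, ← mul_sub, contMat_reverse_sub, ← hδ, mul_smul_comm, smul_mul_assoc, ends]
  have diff_nonneg : 0 ≤ δ • !![(z : ℝ) * (β - α) - 1, z; β - α, 1] := by
    have := one_le_mul_of_one_le_of_one_le hz' hβα
    simp only [matrix_le_iff, Matrix.smul_apply, smul_eq_mul, Matrix.zero_apply, of_apply,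
      cons_val', cons_val_zero, cons_val_one, cons_val_fin_one]
    refine ⟨⟨?_, ?_⟩, ?_, ?_⟩ <;> refine mul_nonneg δ_pos.le ?_ <;> linarith
  refine lt_of_le_of_ne (sub_nonneg.1 (diff ▸ diff_nonneg)) fun heq => δ_pos.ne' ?_
  rw [heq, sub_self] at diff
  simpa using (congrFun (congrFun diff 1) 1).symm

lemma contMat_eq_of_maximal {S : Set (Matrix (Fin 2) (Fin 2) ℝ)} {k : ℕ} {l₁ m m' l₂ : List ℕ}
    {Q : Matrix (Fin 2) (Fin 2) ℝ} (hQ : 0 ≤ Q) (hQu : IsUnit Q)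
    (hmax : Maximal (· ∈ S ^ k) (contMat (l₁ ++ m ++ l₂) * Q))
    (hm' : contMat (l₁ ++ m' ++ l₂) * Q ∈ S ^ k) (hle : contMat m ≤ contMat m') :
    contMat m = contMat m' := by
  have factor (m : List ℕ) :
      contMat (l₁ ++ m ++ l₂) * Q = contMat l₁ * (contMat m * (contMat l₂ * Q)) := by
    simp only [contMat_append, mul_assoc]
  rw [factor] at hmax hm'
  have heq := hmax.eq_of_le hm' <| mul_le_mul_of_nonneg_left
    (mul_le_mul_of_nonneg_right hle (mul_nonneg (contMat_nonneg l₂) hQ)) (contMat_nonneg l₁)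
  exact ((isUnit_contMat l₂).mul hQu).mul_left_injective
    ((isUnit_contMat l₁).mul_right_injective heq)

/-! ### Words with few ascents -/

/-- The list of pairs `(α, β)` of consecutive letters `α < β` of a word. -/
def ascents (l : List ℕ) : List (ℕ × ℕ) := (l.zip l.tail).filter fun p => p.1 < p.2

lemma ascents_cons_cons (x y : ℕ) (l : List ℕ) :
    ascents (x :: y :: l) = if x < y then (x, y) :: ascents (y :: l) else ascents (y :: l) := by
  simp only [ascents, List.tail_cons, List.zip_cons_cons, List.filter_cons, decide_eq_true_eq]

lemma ascents_singleton (x : ℕ) : ascents [x] = [] := rfl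

lemma length_ascents_cons_le (x : ℕ) (l : List ℕ) :
    (ascents (x :: l)).length ≤ (ascents l).length + 1 := by
  cases l with
  | nil => simp [ascents]
  | cons y l => rw [ascents_cons_cons]; split_ifs <;> simp

lemma exists_append_of_mem_ascents {p : ℕ × ℕ} {l : List ℕ} (h : p ∈ ascents l) :
    p.1 < p.2 ∧ ∃ l₁ l₂, l = l₁ ++ p.1 :: p.2 :: l₂ := by
  induction l with
  | nil => simp [ascents] at h
  | cons x l ih =>
    cases l with
    | nil => simp [ascents] at h
    | cons y l =>
      rw [ascents_cons_cons] at h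
      have extend (h : p ∈ ascents (y :: l)) :
          p.1 < p.2 ∧ ∃ l₁ l₂, x :: y :: l = l₁ ++ p.1 :: p.2 :: l₂ :=
        let ⟨hlt, l₁, l₂, heq⟩ := ih h
        ⟨hlt, x :: l₁, l₂, congrArg (x :: ·) heq⟩
      split_ifs at h with hxy
      · rcases List.mem_cons.1 h with rfl | h
        exacts [⟨hxy, [], l, rfl⟩, extend h]
      · exact extend h

lemma exists_append_of_not_nodup_ascents {l : List ℕ} (h : ¬(ascents l).Nodup) :
    ∃ α β l₁ l₂ l₃, α < β ∧ l = l₁ ++ α :: β :: (l₂ ++ α :: β :: l₃) := by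
  induction l with
  | nil => simp [ascents] at h
  | cons x l ih =>
    cases l with
    | nil => simp [ascents] at h
    | cons y l =>
      rw [ascents_cons_cons] at h
      by_cases hl : (ascents (y :: l)).Nodup
      · split_ifs at h with hxy
        · have hmem : (x, y) ∈ ascents (y :: l) := by simpa [hl] using h
          obtain ⟨-, l₁, l₂, heq⟩ := exists_append_of_mem_ascents hmem
          cases l₁ with
          | nil => exact absurd (List.cons.inj heq).1 hxy.ne'
          | cons z l₁ => exact ⟨x, y, [], l₁, l₂, hxy, by rw [(List.cons.inj heq).2]; rfl⟩
        · exact absurd hl h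
      · obtain ⟨α, β, l₁, l₂, l₃, hlt, heq⟩ := ih hl
        exact ⟨α, β, x :: l₁, l₂, l₃, hlt, congrArg (x :: ·) heq⟩

lemma length_ascents_le_of_nodup {b : ℕ} {l : List ℕ} (hb : ∀ x ∈ l, x < b)
    (h : (ascents l).Nodup) : (ascents l).length ≤ b ^ 2 := by
  rw [← List.toFinset_card_of_nodup h]
  calc (ascents l).toFinset.card ≤ (Finset.range b ×ˢ Finset.range b).card := by
        refine Finset.card_le_card fun p hp => ?_
        obtain ⟨-, l₁, l₂, rfl⟩ := exists_append_of_mem_ascents (List.mem_toFinset.1 hp)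
        simp only [List.mem_append, List.mem_cons] at hb
        exact Finset.mem_product.2 ⟨Finset.mem_range.2 (hb _ (by tauto)),
          Finset.mem_range.2 (hb _ (by tauto))⟩
    _ = b ^ 2 := by rw [Finset.card_product, Finset.card_range, sq]

/-- The words obtained by concatenating `j` blocks, each of at most `n` equal letters, where the
letters of the blocks are prescribed and decrease cyclically modulo `b`. A word over `{0, …, b - 1}`
with `s` ascents is of this form with `j ≤ b (s + 1)`. -/
def stairWords (b n : ℕ) : ℕ → Finset (List ℕ)
  | 0 => {[]}
  | j + 1 => Finset.image₂ (fun e l => List.replicate e (j % b) ++ l) (Finset.range (n + 1))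
      (stairWords b n j)

lemma card_stairWords_le (b n j : ℕ) : (stairWords b n j).card ≤ (n + 1) ^ j := by
  induction j with
  | zero => simp [stairWords]
  | succ j ih =>
    calc (stairWords b n (j + 1)).card ≤ (Finset.range (n + 1)).card * (stairWords b n j).card :=
          Finset.card_image₂_le ..
      _ ≤ (n + 1) ^ (j + 1) := by
        rw [Finset.card_range, pow_succ']
        exact Nat.mul_le_mul_left _ ih

lemma replicate_append_mem_stairWords {b n j e : ℕ} {l : List ℕ} (he : e ≤ n)
    (hl : l ∈ stairWords b n j) : List.replicate e (j % b) ++ l ∈ stairWords b n (j + 1) :=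
  Finset.mem_image₂_of_mem (Finset.mem_range_succ_iff.2 he) hl

lemma stairWords_mono (b n : ℕ) : Monotone (stairWords b n) :=
  monotone_nat_of_le_succ fun _ _ hl => replicate_append_mem_stairWords (Nat.zero_le n) hl

lemma stairWords_mono_left (b j : ℕ) : Monotone (stairWords b · j) := by
  intro m n hmn
  induction j with
  | zero => exact le_rfl
  | succ j ih => exact Finset.image₂_subset (Finset.range_mono (Nat.succ_le_succ hmn)) ih

lemma cons_mem_stairWords {b n j : ℕ} {l : List ℕ} (hl : l ∈ stairWords b n (j + 1)) :
    j % b :: l ∈ stairWords b (n + 1) (j + 1) := by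
  obtain ⟨e, he, l, hl', rfl⟩ := Finset.mem_image₂.1 hl
  exact replicate_append_mem_stairWords (e := e + 1)
    (Nat.succ_le_succ (Finset.mem_range_succ_iff.1 he)) (stairWords_mono_left b j n.le_succ hl')

lemma cons_mem_stairWords_of_forall_lt {b x : ℕ} {l : List ℕ} (hb : ∀ y ∈ x :: l, y < b) :
    x :: l ∈ stairWords b (l.length + 1) (b * (ascents (x :: l)).length + x + 1) := by
  have head_letter {x : ℕ} (hx : x < b) (s : ℕ) : (b * s + x) % b = x := by
    rw [Nat.mul_add_mod, Nat.mod_eq_of_lt hx]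
  induction l generalizing x with
  | nil =>
    rw [ascents_singleton, List.length_nil, List.length_nil, mul_zero, zero_add, zero_add]
    have := cons_mem_stairWords
      (stairWords_mono b 0 (Nat.zero_le (x + 1)) (Finset.mem_singleton_self []))
    rwa [Nat.mod_eq_of_lt (hb x List.mem_cons_self)] at this
  | cons y l ih =>
    rw [List.forall_mem_cons] at hb
    set s := (ascents (x :: y :: l)).length with hs
    have tail_mem : y :: l ∈ stairWords b (l.length + 1) (b * s + x + 1) := by
      refine stairWords_mono b _ ?_ (ih hb.2)
      have hy := hb.2 y List.mem_cons_self
      rw [hs, ascents_cons_cons]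
      split_ifs
      · rw [List.length_cons, mul_add_one]
        omega
      · gcongr
        omega
    have := cons_mem_stairWords tail_mem
    rwa [head_letter hb.1] at this

lemma mem_stairWords_of_length_ascents_le {b s n : ℕ} {l : List ℕ} (hb : ∀ x ∈ l, x < b)
    (hs : (ascents l).length ≤ s) (hn : l.length ≤ n) : l ∈ stairWords b n (b * (s + 1)) := by
  refine stairWords_mono_left b _ hn ?_
  cases l with
  | nil => exact stairWords_mono b 0 (Nat.zero_le _) (Finset.mem_singleton_self _)
  | cons x l =>
    refine stairWords_mono b _ ?_ (cons_mem_stairWords_of_forall_lt hb)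
    have hx := hb x List.mem_cons_self
    have := Nat.mul_le_mul_left b hs
    rw [mul_add_one]
    omega

/-! ### Nonnegative functionals -/

lemma exists_eq_concat {α : Type*} (x : α) (l : List α) : ∃ l' y, x :: l = l' ++ [y] :=
  ⟨_, _, (List.dropLast_append_getLast (List.cons_ne_nil x l)).symm⟩

lemma exists_eq_append_of_mem_tail_dropLast {α : Type*} {x : α} {l : List α}
    (h : x ∈ l.tail.dropLast) : ∃ l₁ y z l₂, l = l₁ ++ [y, x, z] ++ l₂ := by
  cases l with
  | nil => simp at h
  | cons a t =>
    obtain ⟨p, q, hpq⟩ := List.append_of_mem h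
    have ht : t ≠ [] := by rintro rfl; simp at h
    obtain ⟨l₁, y, hy⟩ := exists_eq_concat a p
    obtain ⟨z, l₂, hz⟩ := List.exists_cons_of_ne_nil
      (List.append_ne_nil_of_right_ne_nil q (List.cons_ne_nil (t.getLast ht) []))
    refine ⟨l₁, y, z, l₂, ?_⟩
    calc a :: t = a :: (p ++ x :: q ++ [t.getLast ht]) := by
          rw [← hpq, List.tail_cons, List.dropLast_append_getLast]
      _ = (a :: p) ++ x :: (q ++ [t.getLast ht]) := by simp
      _ = l₁ ++ [y, x, z] ++ l₂ := by rw [hy, hz]; simp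

lemma nodup_ascents_drop_two_of_maximal {S : Set (Matrix (Fin 2) (Fin 2) ℝ)} {k y z : ℕ}
    {l : List ℕ} {Q : Matrix (Fin 2) (Fin 2) ℝ} (hQ : 0 ≤ Q) (hQu : IsUnit Q)
    (hmax : Maximal (· ∈ S ^ k) (contMat (y :: z :: l) * Q))
    (hpos : ∀ x ∈ (z :: l).dropLast, 0 < x)
    (hperm : ∀ l', l'.Perm (y :: z :: l) → contMat l' * Q ∈ S ^ k) : (ascents l).Nodup := by
  by_contra hdup
  obtain ⟨α, β, l₁, l₂, l₃, hαβ, rfl⟩ := exists_append_of_not_nodup_ascents hdup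
  obtain ⟨p, w, hw⟩ := exists_eq_concat z l₁
  have hsplit : z :: (l₁ ++ α :: β :: (l₂ ++ α :: β :: l₃)) =
      p ++ ([w, α] ++ (β :: l₂ ++ [α]) ++ [β]) ++ l₃ := by
    calc _ = (z :: l₁) ++ α :: β :: (l₂ ++ α :: β :: l₃) := rfl
      _ = _ := by rw [hw]; simp
  have interior : (z :: (l₁ ++ α :: β :: (l₂ ++ α :: β :: l₃))).dropLast =
      (p ++ ([w, α] ++ (β :: l₂ ++ [α]))) ++ (β :: l₃).dropLast := by
    rw [← List.dropLast_append_of_ne_nil (List.cons_ne_nil β l₃), hsplit]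
    simp
  simp only [interior, List.mem_append, List.mem_cons] at hpos
  have hlt := contMat_lt_contMat_reverse (l := l₂) (hpos w (by simp)) hαβ
    fun x hx => hpos x (by simp [hx])
  rw [hsplit, ← List.cons_append, ← List.cons_append] at hmax hperm
  have perm : (y :: p ++ ([w, α] ++ (β :: l₂ ++ [α]).reverse ++ [β]) ++ l₃).Perm
      (y :: p ++ ([w, α] ++ (β :: l₂ ++ [α]) ++ [β]) ++ l₃) :=
    ((((List.reverse_perm _).append_left _).append_right _).append_left _).append_right _
  exact hlt.ne (contMat_eq_of_maximal hQ hQu hmax (hperm _ perm) hlt.le)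

lemma length_ascents_le_of_maximal {S : Set (Matrix (Fin 2) (Fin 2) ℝ)} {k b : ℕ}
    {l : List ℕ} {Q : Matrix (Fin 2) (Fin 2) ℝ} (hQ : 0 ≤ Q) (hQu : IsUnit Q)
    (hmax : Maximal (· ∈ S ^ k) (contMat l * Q)) (hb : ∀ x ∈ l, x < b)
    (hpos : ∀ x ∈ l.tail.dropLast, 0 < x)
    (hperm : ∀ l', l'.Perm l → contMat l' * Q ∈ S ^ k) : (ascents l).length ≤ b ^ 2 + 2 := by
  match l with
  | [] | [_] => exact Nat.zero_le _
  | y :: z :: l =>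
    have hnodup := nodup_ascents_drop_two_of_maximal hQ hQu hmax hpos hperm
    rw [List.forall_mem_cons, List.forall_mem_cons] at hb
    calc (ascents (y :: z :: l)).length ≤ (ascents (z :: l)).length + 1 :=
          length_ascents_cons_le y _
      _ ≤ (ascents l).length + 2 := Nat.succ_le_succ (length_ascents_cons_le z l)
      _ ≤ b ^ 2 + 2 := Nat.add_le_add_right (length_ascents_le_of_nodup hb.2.2 hnodup) 2

lemma polyDominated_Ici_of_forall_maximal {S : Set (Matrix (Fin 2) (Fin 2) ℝ)} (hS : S.Finite)
    (𝒬 : Finset (Matrix (Fin 2) (Fin 2) ℝ)) (b : ℕ) (h𝒬 : ∀ Q ∈ 𝒬, 0 ≤ Q ∧ IsUnit Q)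
    (h : ∀ k M, Maximal (· ∈ S ^ k) M → ∃ l, ∃ Q ∈ 𝒬, contMat l * Q = M ∧ l.length ≤ k + 1 ∧
      (∀ x ∈ l, x < b) ∧ (∀ x ∈ l.tail.dropLast, 0 < x) ∧
      ∀ l', l'.Perm l → contMat l' * Q ∈ S ^ k) :
    PolyDominated S (Ici 0) := by
  classical
  have pow_finite (k : ℕ) : (S ^ k).Finite := by
    lift S to Finset (Matrix (Fin 2) (Fin 2) ℝ) using hS
    exact Finset.coe_pow S k ▸ (S ^ k).finite_toSet
  set d := b * (b ^ 2 + 2 + 1)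
  have growth (k : ℕ) : (k + 2) ^ d * 𝒬.card ≤ 𝒬.card * 2 ^ d * (k + 1) ^ d := by
    rw [mul_comm, mul_assoc, ← mul_pow]
    gcongr
    omega
  refine ⟨𝒬.card * 2 ^ d, d, fun k => ⟨(Finset.image₂ (contMat · * ·) (stairWords b (k + 1) d)
    𝒬).filter (· ∈ S ^ k), fun N hN => (Finset.mem_filter.1 hN).2, ?_, fun c hc a ha M hM => ?_⟩⟩
  · calc _ ≤ (Finset.image₂ (contMat · * ·) (stairWords b (k + 1) d) 𝒬).card :=
          Finset.card_filter_le _ _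
      _ ≤ (stairWords b (k + 1) d).card * 𝒬.card := Finset.card_image₂_le ..
      _ ≤ (k + 2) ^ d * 𝒬.card := Nat.mul_le_mul_right _ (card_stairWords_le b (k + 1) d)
      _ ≤ 𝒬.card * 2 ^ d * (k + 1) ^ d := growth k
  · obtain ⟨N, hMN, hN⟩ := (pow_finite k).exists_le_maximal hM
    obtain ⟨l, Q, hQ, rfl, hlen, hb, hpos, hperm⟩ := h k N hN
    have hasc := length_ascents_le_of_maximal (h𝒬 Q hQ).1 (h𝒬 Q hQ).2 hN hb hpos hperm
    refine ⟨_, Finset.mem_filter.2 ⟨Finset.mem_image₂_of_mem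
      (mem_stairWords_of_length_ascents_le hb hasc hlen) hQ, hN.prop⟩, ?_⟩
    exact dotProduct_mulVec_le_of_nonneg hMN ha hc

lemma contMat_zero_cons (l : List ℕ) : contMat (0 :: l) = J * contMat l := by
  rw [contMat_cons, Nat.cast_zero, J]

lemma contMat_succ_cons (n : ℕ) (l : List ℕ) : contMat ((n + 1) :: l) = U * contMat (n :: l) := by
  rw [contMat_cons, contMat_cons, ← mul_assoc]
  simp [U]

lemma contMat_cons_eq_U_pow_mul (n : ℕ) (l : List ℕ) :
    contMat (n :: l) = U ^ n * (J * contMat l) := by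
  induction n with
  | zero => rw [contMat_zero_cons, pow_zero, one_mul]
  | succ n ih => rw [contMat_succ_cons, ih, pow_succ', mul_assoc]

lemma contMat_one_zero_cons (l : List ℕ) : contMat (1 :: 0 :: l) = U * contMat l := by
  rw [contMat_succ_cons, contMat_zero_cons, contMat_zero_cons, ← mul_assoc J, J_mul_J, one_mul]

lemma contMat_zero_one_cons (l : List ℕ) : contMat (0 :: 1 :: l) = L * contMat l := by
  rw [contMat_zero_cons, contMat_succ_cons, contMat_zero_cons, ← J_mul_U_mul_J]
  simp only [mul_assoc]

lemma isUnit_J : IsUnit J := .of_mul_eq_one J J_mul_J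

lemma J_pow_mem (n : ℕ) : J ^ n ∈ ({1, J} : Finset (Matrix (Fin 2) (Fin 2) ℝ)) := by
  induction n with
  | zero => simp
  | succ n ih =>
    rw [Finset.mem_insert, Finset.mem_singleton] at ih ⊢
    rcases ih with h | h <;> rw [pow_succ, h]
    exacts [.inr (one_mul J), .inl J_mul_J]

lemma conj_J_mem_UL_pow {k : ℕ} {M : Matrix (Fin 2) (Fin 2) ℝ}
    (hM : M ∈ ({U, L} : Set (Matrix (Fin 2) (Fin 2) ℝ)) ^ k) :
    J * M * J ∈ ({U, L} : Set (Matrix (Fin 2) (Fin 2) ℝ)) ^ k := by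
  have J_mul_L_mul_J : J * L * J = U := by rw [J_mul_L, ← U_mul_J, mul_assoc, J_mul_J, mul_one]
  have hJJ : ({J} : Set (Matrix (Fin 2) (Fin 2) ℝ)) * {J} = 1 := by
    rw [singleton_mul_singleton, J_mul_J, singleton_one]
  have conj_pair : ({J} : Set (Matrix (Fin 2) (Fin 2) ℝ)) * {U, L} * {J} = {U, L} := by
    rw [Set.singleton_mul, Set.mul_singleton, image_pair, image_pair, J_mul_U_mul_J,
      J_mul_L_mul_J, pair_comm]
  rw [← conj_pair, conj_pow_of_mul_self_eq_one hJJ]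
  exact mul_mem_mul (mul_mem_mul rfl hM) rfl

lemma exists_contMat_of_mem_UL_pow {k : ℕ} {M : Matrix (Fin 2) (Fin 2) ℝ}
    (hM : M ∈ ({U, L} : Set (Matrix (Fin 2) (Fin 2) ℝ)) ^ k) :
    ∃ n l, (n :: l).sum = k ∧ (∀ x ∈ l, 0 < x) ∧ contMat (n :: l) * J ^ (n :: l).length = M := by
  induction k generalizing M with
  | zero =>
    refine ⟨0, [], rfl, by simp, ?_⟩
    rw [contMat_zero_cons, contMat_nil, mul_one, List.length_singleton, pow_one, J_mul_J]
    exact hM.symm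
  | succ k ih =>
    rw [pow_succ'] at hM
    obtain ⟨T, hT, N, hN, rfl⟩ := Set.mem_mul.1 hM
    obtain ⟨n, l, hsum, hpos, rfl⟩ := ih hN
    rcases hT with rfl | rfl
    · exact ⟨n + 1, l, by simpa [add_right_comm] using hsum, hpos,
        by rw [contMat_succ_cons, mul_assoc]; rfl⟩
    rw [← mul_assoc, ← contMat_zero_one_cons]
    match n, l with
    | n + 1, l =>
      refine ⟨0, 1 :: (n + 1) :: l, ?_, by simpa using hpos, ?_⟩
      · simp only [List.sum_cons] at hsum ⊢
        omega
      · rw [List.length_cons, List.length_cons, pow_succ, pow_succ, mul_assoc _ J, J_mul_J,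
          mul_one]
    | 0, m :: l =>
      refine ⟨0, (m + 1) :: l, ?_, ?_, ?_⟩
      · simp only [List.sum_cons] at hsum ⊢
        omega
      · exact List.forall_mem_cons.2 ⟨m.succ_pos, fun x hx => hpos x (.tail m hx)⟩
      · rw [contMat_zero_cons, contMat_zero_cons, contMat_one_zero_cons, contMat_succ_cons]
        rfl
    | 0, [] =>
      refine ⟨0, [1], by simpa using hsum.symm, by simp, ?_⟩
      rw [contMat_zero_cons, contMat_zero_cons, contMat_one_zero_cons, contMat_succ_cons,
        contMat_zero_cons, contMat_nil]
      simp only [List.length_cons, List.length_nil, pow_succ, pow_zero, mul_assoc, one_mul, J_mul_J,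
        mul_one]

lemma contMat_mul_J_pow_mem (l : List ℕ) :
    contMat l * J ^ l.length ∈ ({U, L} : Set (Matrix (Fin 2) (Fin 2) ℝ)) ^ l.sum := by
  induction l with
  | nil =>
    rw [contMat_nil, List.length_nil, List.sum_nil, pow_zero, pow_zero, mul_one]
    exact Set.one_mem_one
  | cons n l ih =>
    have split : contMat (n :: l) * J ^ (n :: l).length =
        U ^ n * (J * (contMat l * J ^ l.length) * J) := by
      rw [contMat_cons_eq_U_pow_mul, List.length_cons, pow_succ]
      simp only [mul_assoc]
    rw [split, List.sum_cons, pow_add]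
    exact mul_mem_mul (Set.pow_mem_pow (.inl rfl)) (conj_J_mem_UL_pow ih)

lemma lt_three_of_maximal_UL {k x : ℕ} {l : List ℕ}
    (hmax : Maximal (· ∈ ({U, L} : Set (Matrix (Fin 2) (Fin 2) ℝ)) ^ k)
      (contMat l * J ^ l.length)) (hsum : l.sum = k) (hx : x ∈ l) : x < 3 := by
  by_contra! h
  obtain ⟨y, rfl⟩ := Nat.exists_eq_add_of_le' h
  obtain ⟨l₁, l₂, rfl⟩ := List.append_of_mem hx
  rw [List.append_cons] at hmax hsum
  have hmem := contMat_mul_J_pow_mem (l₁ ++ [1, 1, y + 1] ++ l₂)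
  have hlen : (l₁ ++ [1, 1, y + 1] ++ l₂).length = (l₁ ++ [y + 3] ++ l₂).length + 2 := by
    simp only [List.length_append, List.length_cons, List.length_nil]
    omega
  have hsum' : (l₁ ++ [1, 1, y + 1] ++ l₂).sum = k := by
    simp only [← hsum, List.sum_append, List.sum_cons, List.sum_nil]
    omega
  rw [hlen, hsum', pow_add, sq, J_mul_J, mul_one] at hmem
  have hle : contMat [y + 3] ≤ contMat [1, 1, y + 1] := by
    simp only [contMat_cons, contMat_nil, mul_one, mul_fin_two, matrix_le_iff, of_apply, cons_val',
      cons_val_zero, cons_val_one, cons_val_fin_one]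
    push_cast
    refine ⟨⟨?_, ?_⟩, ?_, ?_⟩ <;> linarith
  have heq := contMat_eq_of_maximal (pow_nonneg J_nonneg _) (isUnit_J.pow _) hmax hmem hle
  have := congrFun (congrFun heq 1) 1
  simp [contMat_cons, contMat_nil] at this

lemma polyDominated_UL_Ici : PolyDominated {U, L} (Ici 0) := by
  classical
  refine polyDominated_Ici_of_forall_maximal (toFinite _) {1, J} 3 ?_ fun k M hM => ?_
  · simp only [Finset.forall_mem_insert, Finset.mem_singleton, forall_eq]
    exact ⟨⟨zero_le_one, isUnit_one⟩, J_nonneg, isUnit_J⟩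
  obtain ⟨n, l, hsum, hpos, rfl⟩ := exists_contMat_of_mem_UL_pow hM.prop
  refine ⟨n :: l, _, J_pow_mem _, rfl, ?_, fun x => lt_three_of_maximal_UL hM hsum,
    fun x hx => hpos x (List.mem_of_mem_dropLast hx), fun l' hl' => ?_⟩
  · have := List.length_le_sum_of_one_le l hpos
    rw [List.sum_cons] at hsum
    rw [List.length_cons]
    omega
  · rw [← hl'.length_eq, ← hsum, ← hl'.sum_eq]
    exact contMat_mul_J_pow_mem l'

lemma exists_contMat_of_mem_JU_pow {k : ℕ} {M : Matrix (Fin 2) (Fin 2) ℝ}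
    (hM : M ∈ ({J, U} : Set (Matrix (Fin 2) (Fin 2) ℝ)) ^ k) :
    ∃ l, l.sum + l.length = k + 1 ∧ contMat l * J = M := by
  induction k generalizing M with
  | zero =>
    refine ⟨[0], rfl, ?_⟩
    rw [contMat_zero_cons, contMat_nil, mul_one, J_mul_J]
    exact hM.symm
  | succ k ih =>
    rw [pow_succ'] at hM
    obtain ⟨T, hT, N, hN, rfl⟩ := Set.mem_mul.1 hM
    obtain ⟨l, hl, rfl⟩ := ih hN
    rcases hT with rfl | rfl
    · refine ⟨0 :: l, ?_, by rw [contMat_zero_cons, mul_assoc]⟩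
      rw [List.sum_cons, List.length_cons, zero_add, ← add_assoc, hl]
    · cases l with
      | nil => simp at hl
      | cons n l =>
        refine ⟨(n + 1) :: l, ?_, by rw [contMat_succ_cons, mul_assoc]⟩
        simp only [List.sum_cons, List.length_cons] at hl ⊢
        omega

lemma contMat_mul_J_mem {k : ℕ} {l : List ℕ} (hl : l.sum + l.length = k + 1) :
    contMat l * J ∈ ({J, U} : Set (Matrix (Fin 2) (Fin 2) ℝ)) ^ k := by
  induction l generalizing k with
  | nil => simp at hl
  | cons n l ih =>
    rw [contMat_cons_eq_U_pow_mul, mul_assoc]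
    rw [List.sum_cons, List.length_cons] at hl
    cases l with
    | nil =>
      obtain rfl : k = n := by simpa using hl.symm
      rw [contMat_nil, mul_one, J_mul_J, mul_one]
      exact Set.pow_mem_pow (.inr rfl)
    | cons m l =>
      obtain ⟨k, rfl⟩ := Nat.exists_eq_add_of_le (show n + 1 ≤ k by
        rw [List.length_cons] at hl
        omega)
      rw [add_assoc, add_comm 1 k, pow_add, pow_succ', mul_assoc J]
      exact mul_mem_mul (Set.pow_mem_pow (.inr rfl)) (mul_mem_mul (.inl rfl) (ih (by omega)))

lemma lt_five_of_maximal_JU {k x : ℕ} {l : List ℕ}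
    (hmax : Maximal (· ∈ ({J, U} : Set (Matrix (Fin 2) (Fin 2) ℝ)) ^ k) (contMat l * J))
    (hl : l.sum + l.length = k + 1) (hx : x ∈ l) : x < 5 := by
  by_contra! h
  obtain ⟨y, rfl⟩ := Nat.exists_eq_add_of_le' h
  obtain ⟨l₁, l₂, rfl⟩ := List.append_of_mem hx
  rw [List.append_cons] at hmax hl
  have hmem : contMat (l₁ ++ [2, y + 2] ++ l₂) * J ∈ _ := contMat_mul_J_mem (k := k) <| by
    simp only [← hl, List.sum_append, List.sum_cons, List.sum_nil, List.length_append,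
      List.length_cons, List.length_nil]
    omega
  have hle : contMat [y + 5] ≤ contMat [2, y + 2] := by
    simp only [contMat_cons, contMat_nil, mul_one, mul_fin_two, matrix_le_iff, of_apply, cons_val',
      cons_val_zero, cons_val_one, cons_val_fin_one]
    push_cast
    refine ⟨⟨?_, ?_⟩, ?_, ?_⟩ <;> linarith
  have heq := contMat_eq_of_maximal J_nonneg isUnit_J hmax hmem hle
  have := congrFun (congrFun heq 1) 1
  simp [contMat_cons, contMat_nil] at this

lemma pos_of_maximal_JU {k x : ℕ} {l : List ℕ}
    (hmax : Maximal (· ∈ ({J, U} : Set (Matrix (Fin 2) (Fin 2) ℝ)) ^ k) (contMat l * J))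
    (hl : l.sum + l.length = k + 1) (hx : x ∈ l.tail.dropLast) : 0 < x := by
  by_contra! h
  obtain rfl := Nat.le_zero.1 h
  obtain ⟨l₁, y, z, l₂, rfl⟩ := exists_eq_append_of_mem_tail_dropLast hx
  have hmem : contMat (l₁ ++ [y + z + 2] ++ l₂) * J ∈ _ := contMat_mul_J_mem (k := k) <| by
    simp only [← hl, List.sum_append, List.sum_cons, List.sum_nil, List.length_append,
      List.length_cons, List.length_nil]
    omega
  have hle : contMat [y, 0, z] ≤ contMat [y + z + 2] := by
    simp [contMat_cons, contMat_nil, matrix_le_iff]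
  have heq := contMat_eq_of_maximal J_nonneg isUnit_J hmax hmem hle
  have := congrFun (congrFun heq 0) 0
  simp [contMat_cons, contMat_nil] at this

lemma polyDominated_JU_Ici : PolyDominated {J, U} (Ici 0) := by
  refine polyDominated_Ici_of_forall_maximal (toFinite _) {J} 5 ?_ fun k M hM => ?_
  · simp only [Finset.mem_singleton, forall_eq]
    exact ⟨J_nonneg, isUnit_J⟩
  obtain ⟨l, hl, rfl⟩ := exists_contMat_of_mem_JU_pow hM.prop
  refine ⟨l, J, Finset.mem_singleton_self J, rfl, by omega, fun x => lt_five_of_maximal_JU hM hl,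
    fun x => pos_of_maximal_JU hM hl, fun l' hl' => contMat_mul_J_mem ?_⟩
  rw [hl'.sum_eq, hl'.length_eq, hl]

/-! ### Pairs of nonsingular binary matrices -/

lemma one_le_U : 1 ≤ U := by simp [matrix_le_iff, U]

lemma polyDominated_UL : PolyDominated {U, L} univ :=
  .univ_of_UL polyDominated_UL_Ici polyDominated_UL_Iic

lemma polyDominated_JU : PolyDominated {J, U} univ :=
  .univ_of_JU polyDominated_JU_Ici (polyDominated_Iic_of_involution J_nonneg J_mul_J one_le_U)

lemma polyDominated_FG : PolyDominated {F, G} univ := by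
  have mul_J : ({U, L} : Set (Matrix (Fin 2) (Fin 2) ℝ)) * {J} = {F, G} := by
    rw [Set.mul_singleton, image_pair, U_mul_J, L_mul_J]
  have J_mul : ({J} : Set (Matrix (Fin 2) (Fin 2) ℝ)) * {U, L} = {F, G} := by
    rw [Set.singleton_mul, image_pair, J_mul_U, J_mul_L, pair_comm]
  exact mul_J ▸ polyDominated_UL.mul_singleton J_nonneg (mul_J.trans J_mul.symm)

lemma PolyDominated.conj_J {A B : Matrix (Fin 2) (Fin 2) ℝ} (h : PolyDominated {A, B} univ) :
    PolyDominated {J * A * J, J * B * J} univ := by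
  simpa only [Set.singleton_mul, Set.mul_singleton, image_pair]
    using h.conj_involution J_nonneg J_mul_J

lemma J_mul_J_mul_J : J * J * J = J := by rw [J_mul_J, one_mul]

lemma polyDominated_JL : PolyDominated {J, L} univ := by
  simpa only [J_mul_J_mul_J, J_mul_U_mul_J] using polyDominated_JU.conj_J

lemma polyDominated_JG : PolyDominated {J, G} univ := by
  simpa only [J_mul_J_mul_J, J_mul_F_mul_J] using polyDominated_JF.conj_J

lemma polyDominated_LF : PolyDominated {L, F} univ := by
  simpa only [J_mul_U_mul_J, J_mul_G_mul_J] using polyDominated_UG.conj_J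

lemma polyDominated_LG : PolyDominated {L, G} univ := by
  simpa only [J_mul_U_mul_J, J_mul_F_mul_J] using polyDominated_UF.conj_J

/-- The nonsingular `2 × 2` matrices with entries in `{0, 1}`. -/
def nonsingularBinary : Set (Matrix (Fin 2) (Fin 2) ℝ) := {1, J, U, L, F, G}

lemma pairwise_polyDominated : nonsingularBinary.Pairwise fun A B => PolyDominated {A, B} univ := by
  have : Std.Symm fun A B : Matrix (Fin 2) (Fin 2) ℝ => PolyDominated {A, B} univ :=
    ⟨fun A B h => by rwa [pair_comm]⟩
  have one_left (T : Matrix (Fin 2) (Fin 2) ℝ) : PolyDominated {1, T} univ :=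
    polyDominated_of_subset_one_pair Subset.rfl
  simp [nonsingularBinary, pairwise_insert_of_symm, one_left, polyDominated_JU, polyDominated_JL,
    polyDominated_JF, polyDominated_JG, polyDominated_UL, polyDominated_UF,
    polyDominated_UG, polyDominated_LF, polyDominated_LG, polyDominated_FG]

lemma polyDominated_pair {A B : Matrix (Fin 2) (Fin 2) ℝ} (hA : A ∈ nonsingularBinary)
    (hB : B ∈ nonsingularBinary) : PolyDominated {A, B} univ := by
  by_cases hAB : A = B
  · exact polyDominated_of_subset_one_pair (T := B) (by simp [hAB])
  · exact pairwise_polyDominated hA hB hAB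

/-! ### Arbitrary starting vectors -/

section XSeq

variable {n k N : ℕ} {S : Set (Matrix (Fin n) (Fin n) ℝ)} {a x : Fin n → ℝ}

lemma mem_xSeq_succ : x ∈ XSeq S a (k + 1) ↔ ∃ T ∈ S, ∃ y ∈ XSeq S a k, T *ᵥ y = x := by
  simp only [XSeq, mem_iUnion, mem_image, exists_prop]

lemma xSeq_eq_image (S : Set (Matrix (Fin n) (Fin n) ℝ)) (a : Fin n → ℝ) (k : ℕ) :
    XSeq S a k = (· *ᵥ a) '' S ^ k := by
  induction k with
  | zero => rw [pow_zero, ← singleton_one, image_singleton, one_mulVec, XSeq]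
  | succ k ih =>
    ext x
    rw [mem_xSeq_succ, ih, pow_succ']
    constructor
    · rintro ⟨T, hT, _, ⟨M, hM, rfl⟩, rfl⟩
      exact ⟨T * M, mul_mem_mul hT hM, (mulVec_mulVec a T M).symm⟩
    · rintro ⟨_, ⟨T, hT, M, hM, rfl⟩, rfl⟩
      exact ⟨T, hT, _, mem_image_of_mem _ hM, mulVec_mulVec a T M⟩

lemma DominationCardLE.hullCardLE_xSeq (h : DominationCardLE S univ k N) (ha : 0 ≤ a) :
    HullCardLE (XSeq S a k) N := by
  classical
  obtain ⟨G, hGS, hcard, hdom⟩ := h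
  rw [xSeq_eq_image]
  refine ⟨G.image (· *ᵥ a), ?_, subset_convexHull_of_dotProduct_le ?_,
    Finset.card_image_le.trans hcard⟩
  · rw [Finset.coe_image]
    exact image_mono hGS
  · rintro c _ ⟨M, hM, rfl⟩
    obtain ⟨N, hN, hle⟩ := hdom c (mem_univ c) a ha M hM
    exact ⟨_, Finset.mem_image_of_mem _ hN, hle⟩

lemma HullCardLE.of_xSeq_neg (h : HullCardLE (XSeq S (-a) k) N) : HullCardLE (XSeq S a k) N := by
  have := h.image (-LinearMap.id)
  simpa only [xSeq_eq_image, image_image, mulVec_neg, LinearMap.neg_apply, LinearMap.id_coe, id_eq,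
    neg_neg] using this

lemma xSeq_mulVec_subset {T : Matrix (Fin n) (Fin n) ℝ} {w : Fin n → ℝ} {i j : ℕ} (hT : T ∈ S)
    (hw : w ∈ XSeq S a i) : XSeq S (T *ᵥ w) j ⊆ XSeq S a (i + 1 + j) := by
  induction j with
  | zero => exact singleton_subset_iff.2 (mem_xSeq_succ.2 ⟨T, hT, w, hw, rfl⟩)
  | succ j ih => exact biUnion_mono Subset.rfl fun A _ => image_mono ih

lemma mem_or_exists_exit_of_mem_xSeq {P : (Fin n → ℝ) → Prop} {W : ℕ → Set (Fin n → ℝ)}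
    (ha : a ∈ W 0) (hW : ∀ i, ∀ w ∈ W i, ∀ T ∈ S, P (T *ᵥ w) → T *ᵥ w ∈ W (i + 1))
    (hx : x ∈ XSeq S a k) :
    x ∈ W k ∨ ∃ i j, i + 1 + j = k ∧ ∃ T ∈ S, ∃ w ∈ W i, w ∈ XSeq S a i ∧
      ¬P (T *ᵥ w) ∧ x ∈ XSeq S (T *ᵥ w) j := by
  induction k generalizing x with
  | zero => exact .inl (mem_singleton_iff.1 hx ▸ ha)
  | succ k ih =>
    obtain ⟨T, hT, y, hy, rfl⟩ := mem_xSeq_succ.1 hx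
    rcases ih hy with hyW | ⟨i, j, rfl, T', hT', w, hw, hwX, hexit, hyX⟩
    · by_cases hP : P (T *ᵥ y)
      · exact .inl (hW k y hyW T hT hP)
      · exact .inr ⟨k, 0, rfl, T, hT, y, hyW, hy, hP, rfl⟩
    · exact .inr ⟨i, j + 1, rfl, T', hT', w, hw, hwX, hexit, mem_xSeq_succ.2 ⟨T, hT, y, hyX, rfl⟩⟩

/-- Every orbit either stays in `W` or leaves it at a vector where `P` fails, after which it is an
orbit of that vector. -/
lemma hullCardLE_xSeq_of_exits {S : Finset (Matrix (Fin n) (Fin n) ℝ)} {P : (Fin n → ℝ) → Prop}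
    {W : ℕ → Finset (Fin n → ℝ)} (hWmono : Monotone W) (ha : a ∈ W 0)
    (hW : ∀ i, ∀ w ∈ W i, ∀ T ∈ S, P (T *ᵥ w) → T *ᵥ w ∈ W (i + 1))
    (hP : ∀ b j, j ≤ k → ¬P b → HullCardLE (XSeq ↑S b j) N) :
    HullCardLE (XSeq ↑S a k) ((W k).card + k * S.card * (W k).card * N) := by
  classical
  let exits := (Finset.range k ×ˢ S ×ˢ W k).filter fun q =>
    ¬P (q.2.1 *ᵥ q.2.2) ∧ XSeq ↑S (q.2.1 *ᵥ q.2.2) q.1 ⊆ XSeq ↑S a k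
  have decomp : XSeq ↑S a k = ↑((W k).filter (· ∈ XSeq ↑S a k)) ∪
      ⋃ q ∈ exits, XSeq ↑S (q.2.1 *ᵥ q.2.2) q.1 := by
    refine Subset.antisymm (fun x hx => ?_) (union_subset (fun x hx => ?_) (iUnion₂_subset ?_))
    · rcases mem_or_exists_exit_of_mem_xSeq (W := fun i => W i) ha hW hx with
        hxW | ⟨i, j, rfl, T, hT, w, hw, hwX, hexit, hxT⟩
      · exact .inl (Finset.mem_filter.2 ⟨hxW, hx⟩)
      · refine .inr (mem_iUnion₂.2 ⟨(j, T, w), Finset.mem_filter.2 ⟨?_, hexit, ?_⟩, hxT⟩)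
        · exact Finset.mk_mem_product (Finset.mem_range.2 (by omega))
            (Finset.mk_mem_product hT (hWmono (by omega) hw))
        · exact xSeq_mulVec_subset hT hwX
    · exact (Finset.mem_filter.1 hx).2
    · exact fun q hq => (Finset.mem_filter.1 hq).2.2
  have card_exits : exits.card ≤ k * S.card * (W k).card := by
    refine (Finset.card_filter_le _ _).trans ?_
    rw [Finset.card_product, Finset.card_product, Finset.card_range, mul_assoc]
  rw [decomp]
  refine ((hullCardLE_coe_finset _).union (.biUnion exits fun q hq => ?_)).mono
    (Nat.add_le_add (Finset.card_filter_le _ _) (Nat.mul_le_mul_right N card_exits))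
  obtain ⟨hq, hexit, -⟩ := Finset.mem_filter.1 hq
  exact hP _ _ (Finset.mem_range.1 (Finset.mem_product.1 hq).1).le hexit

end XSeq

section EuclidOrbit

variable {a v w : Fin 2 → ℝ} {T : Matrix (Fin 2) (Fin 2) ℝ} {k : ℕ}

/-- The two coordinates of `v` have opposite signs. -/
def IsMixed (v : Fin 2 → ℝ) : Prop := v 0 * v 1 < 0

lemma nonneg_or_neg_nonneg_of_not_isMixed (hv : ¬IsMixed v) : 0 ≤ v ∨ 0 ≤ -v := by
  simp only [Pi.le_def, Fin.forall_fin_two, Pi.zero_apply, neg_nonneg]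
  exact mul_nonneg_iff.1 (not_lt.1 hv)

lemma U_mulVec (v : Fin 2 → ℝ) : U *ᵥ v = ![v 0 + v 1, v 1] := by
  ext i; fin_cases i <;> simp [U, mulVec, vecHead, vecTail]
lemma L_mulVec (v : Fin 2 → ℝ) : L *ᵥ v = ![v 0, v 0 + v 1] := by
  ext i; fin_cases i <;> simp [L, mulVec, vecHead, vecTail]
lemma J_mulVec (v : Fin 2 → ℝ) : J *ᵥ v = ![v 1, v 0] := by
  ext i; fin_cases i <;> simp [J, mulVec, vecHead, vecTail]

lemma isMixed_J_mulVec : IsMixed (J *ᵥ v) ↔ IsMixed v := by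
  simp only [IsMixed, J_mulVec, cons_val_zero, cons_val_one, mul_comm]

lemma IsMixed.not_isMixed_U_mulVec (h : IsMixed (L *ᵥ v)) : ¬IsMixed (U *ᵥ v) := by
  simp only [IsMixed, U_mulVec, L_mulVec, cons_val_zero, cons_val_one] at h ⊢
  nlinarith [sq_nonneg (v 0 + v 1)]

open Classical in
/-- One step of the subtractive Euclidean algorithm for coordinates of opposite signs: it adds the
coordinate of smaller modulus to the other one. -/
def euclidStep (v : Fin 2 → ℝ) : Fin 2 → ℝ := if IsMixed (U *ᵥ v) then U *ᵥ v else L *ᵥ v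

lemma euclidStep_of_isMixed_U_mulVec (h : IsMixed (U *ᵥ v)) : euclidStep v = U *ᵥ v := if_pos h

lemma euclidStep_of_isMixed_L_mulVec (h : IsMixed (L *ᵥ v)) : euclidStep v = L *ᵥ v :=
  if_neg h.not_isMixed_U_mulVec

open Classical in
/-- The iterates of `euclidStep` on `a` of order at most `k`, up to swapping the coordinates. -/
def euclidOrbit (a : Fin 2 → ℝ) (k : ℕ) : Finset (Fin 2 → ℝ) :=
  (Finset.range (k + 1) ×ˢ {1, J}).image fun q => q.2 *ᵥ euclidStep^[q.1] a

lemma mem_euclidOrbit :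
    v ∈ euclidOrbit a k ↔ ∃ i ≤ k, v = euclidStep^[i] a ∨ v = J *ᵥ euclidStep^[i] a := by
  simp only [euclidOrbit, Finset.mem_image, Finset.mem_product, Finset.mem_range_succ_iff,
    Finset.mem_insert, Finset.mem_singleton, Prod.exists, and_assoc, exists_and_left, or_and_right,
    exists_or, exists_eq_left, one_mulVec, eq_comm (a := v)]

lemma card_euclidOrbit_le (a : Fin 2 → ℝ) (k : ℕ) : (euclidOrbit a k).card ≤ 2 * (k + 1) := by
  classical
  calc (euclidOrbit a k).card
      ≤ (Finset.range (k + 1) ×ˢ ({1, J} : Finset (Matrix (Fin 2) (Fin 2) ℝ))).card :=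
        Finset.card_image_le
    _ = ({1, J} : Finset (Matrix (Fin 2) (Fin 2) ℝ)).card * (k + 1) := by
        rw [Finset.card_product, Finset.card_range, mul_comm]
    _ ≤ 2 * (k + 1) := Nat.mul_le_mul_right _ Finset.card_le_two

lemma euclidOrbit_mono (a : Fin 2 → ℝ) : Monotone (euclidOrbit a) := by
  intro i j hij v hv
  obtain ⟨m, hm, hv⟩ := mem_euclidOrbit.1 hv
  exact mem_euclidOrbit.2 ⟨m, hm.trans hij, hv⟩

lemma mulVec_mem_of_isMixed (hT : T ∈ nonsingularBinary) (h : IsMixed (T *ᵥ v)) :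
    T *ᵥ v ∈ ({v, J *ᵥ v, euclidStep v, J *ᵥ euclidStep v} : Set (Fin 2 → ℝ)) := by
  rcases hT with rfl | rfl | rfl | rfl | rfl | rfl
  · simp
  · simp
  · simp [euclidStep_of_isMixed_U_mulVec h]
  · simp [euclidStep_of_isMixed_L_mulVec h]
  · rw [← J_mul_L, ← mulVec_mulVec] at h ⊢
    simp [euclidStep_of_isMixed_L_mulVec (isMixed_J_mulVec.1 h)]
  · rw [← J_mul_U, ← mulVec_mulVec] at h ⊢
    simp [euclidStep_of_isMixed_U_mulVec (isMixed_J_mulVec.1 h)]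

lemma mul_J_mem_nonsingularBinary (hT : T ∈ nonsingularBinary) : T * J ∈ nonsingularBinary := by
  have F_mul_J : F * J = U := by rw [← U_mul_J, mul_assoc, J_mul_J, mul_one]
  have G_mul_J : G * J = L := by rw [← L_mul_J, mul_assoc, J_mul_J, mul_one]
  rcases hT with rfl | rfl | rfl | rfl | rfl | rfl <;>
    simp [nonsingularBinary, J_mul_J, U_mul_J, L_mul_J, F_mul_J, G_mul_J]

lemma mulVec_mem_euclidOrbit (hT : T ∈ nonsingularBinary) (hw : w ∈ euclidOrbit a k)
    (h : IsMixed (T *ᵥ w)) : T *ᵥ w ∈ euclidOrbit a (k + 1) := by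
  obtain ⟨i, hi, hw⟩ := mem_euclidOrbit.1 hw
  obtain ⟨T', hT', hTw⟩ : ∃ T' ∈ nonsingularBinary, T *ᵥ w = T' *ᵥ euclidStep^[i] a := by
    rcases hw with rfl | rfl
    exacts [⟨T, hT, rfl⟩, ⟨T * J, mul_J_mem_nonsingularBinary hT, mulVec_mulVec _ _ _⟩]
  rw [hTw] at h ⊢
  have := mulVec_mem_of_isMixed hT' h
  rw [← Function.iterate_succ_apply' euclidStep] at this
  rw [mem_euclidOrbit]
  rcases this with h | h | h | h
  exacts [⟨i, by omega, .inl h⟩, ⟨i, by omega, .inr h⟩, ⟨i + 1, by omega, .inl h⟩,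
    ⟨i + 1, by omega, .inr h⟩]

lemma PolyDominated.exists_hullCardLE_xSeq {A B : Matrix (Fin 2) (Fin 2) ℝ}
    (h : PolyDominated {A, B} univ) (hA : A ∈ nonsingularBinary) (hB : B ∈ nonsingularBinary) :
    ∃ K d : ℕ, ∀ k a, HullCardLE (XSeq {A, B} a k) (K * (k + 1) ^ d) := by
  classical
  obtain ⟨K, d, hdom⟩ := h
  have of_not_isMixed {k j : ℕ} (b : Fin 2 → ℝ) (hj : j ≤ k) (hb : ¬IsMixed b) :
      HullCardLE (XSeq {A, B} b j) (K * (k + 1) ^ d) := by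
    have hdom : DominationCardLE {A, B} univ j (K * (k + 1) ^ d) :=
      (hdom j).mono Subset.rfl (by gcongr)
    rcases nonneg_or_neg_nonneg_of_not_isMixed hb with hb | hb
    exacts [hdom.hullCardLE_xSeq hb, (hdom.hullCardLE_xSeq hb).of_xSeq_neg]
  have pair_subset : ∀ T ∈ ({A, B} : Finset (Matrix (Fin 2) (Fin 2) ℝ)), T ∈ nonsingularBinary := by
    simp [hA, hB]
  have card_pair : ({A, B} : Finset (Matrix (Fin 2) (Fin 2) ℝ)).card ≤ 2 := Finset.card_le_two
  refine ⟨4 * K + 2, d + 2, fun k a => ?_⟩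
  have exits := hullCardLE_xSeq_of_exits (S := {A, B}) (P := IsMixed) (k := k)
    (N := K * (k + 1) ^ d) (euclidOrbit_mono a) (mem_euclidOrbit.2 ⟨0, le_rfl, .inl rfl⟩)
    (fun i w hw T hT => mulVec_mem_euclidOrbit (pair_subset T hT) hw)
    (Finset.coe_pair (a := A) ▸ fun b j hj hb => of_not_isMixed b hj hb)
  rw [Finset.coe_pair] at exits
  have card_orbit := card_euclidOrbit_le a k
  refine exits.mono ?_
  calc _ ≤ 2 * (k + 1) + (k + 1) * 2 * (2 * (k + 1)) * (K * (k + 1) ^ d) := by gcongr; omega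
    _ = 2 * (k + 1) ^ 1 + 4 * K * (k + 1) ^ (d + 2) := by ring
    _ ≤ 2 * (k + 1) ^ (d + 2) + 4 * K * (k + 1) ^ (d + 2) := by gcongr <;> omega
    _ = (4 * K + 2) * (k + 1) ^ (d + 2) := by ring

end EuclidOrbit

/-! ### Singular matrices -/

section Singular

variable {n : ℕ} {S : Set (Matrix (Fin n) (Fin n) ℝ)}

lemma finite_xSeq (hS : S.Finite) (a : Fin n → ℝ) (k : ℕ) : (XSeq S a k).Finite := by
  induction k with
  | zero => exact finite_singleton a
  | succ k ih => exact hS.biUnion fun A _ => ih.image _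

lemma hullCardLE_two_image_vecMulVec {X : Set (Fin n → ℝ)} (hX : X.Finite) (u l : Fin n → ℝ) :
    HullCardLE ((vecMulVec u l).mulVec '' X) 2 := by
  have image_eq : (vecMulVec u l).mulVec '' X =
      (LinearMap.toSpanSingleton ℝ _ u) '' ((l ⬝ᵥ ·) '' X) := by
    simp only [image_image, vecMulVec_mulVec, op_smul_eq_smul, LinearMap.toSpanSingleton_apply]
  rw [image_eq]
  exact (hullCardLE_two_of_finite (hX.image _)).image _

lemma hullCardLE_xSeq_vecMulVec_pair (u l : Fin n → ℝ) (B : Matrix (Fin n) (Fin n) ℝ)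
    (a : Fin n → ℝ) (k : ℕ) : HullCardLE (XSeq {vecMulVec u l, B} a k) (2 * k + 1) := by
  induction k with
  | zero =>
    simpa only [XSeq, Finset.coe_singleton, Finset.card_singleton] using hullCardLE_coe_finset {a}
  | succ k ih =>
    have hA := hullCardLE_two_image_vecMulVec (finite_xSeq (toFinite {vecMulVec u l, B}) a k) u l
    rw [XSeq, biUnion_pair]
    exact (hA.union (ih.image B.mulVecLin)).mono (by omega)

end Singular

lemma exists_eq_vecMulVec_of_det_eq_zero {K : Type*} [Field K] {A : Matrix (Fin 2) (Fin 2) K}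
    (hA : A.det = 0) : ∃ u l, A = vecMulVec u l := by
  by_cases hrow : A 0 = 0
  · refine ⟨![0, 1], A 1, ?_⟩
    ext i j
    fin_cases i <;> simp [vecMulVec, hrow]
  · obtain ⟨j, hj⟩ := Function.ne_iff.1 hrow
    refine ⟨![1, A 1 j / A 0 j], A 0, ?_⟩
    have proportional (m : Fin 2) : A 1 m * A 0 j = A 1 j * A 0 m := by
      rw [det_fin_two] at hA
      fin_cases j <;> fin_cases m <;> grind
    ext i m
    fin_cases i
    · simp [vecMulVec]
    · rw [Pi.zero_apply] at hj
      simpa [vecMulVec, div_mul_eq_mul_div] using eq_div_of_mul_eq hj (proportional m)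

lemma mem_nonsingularBinary_of_det_ne_zero {A : Matrix (Fin 2) (Fin 2) ℝ}
    (hA : ∀ i j, A i j = 0 ∨ A i j = 1) (hdet : A.det ≠ 0) : A ∈ nonsingularBinary := by
  rw [det_fin_two] at hdet
  rw [A.eta_fin_two]
  rcases hA 0 0 with h00 | h00 <;> rcases hA 0 1 with h01 | h01 <;>
    rcases hA 1 0 with h10 | h10 <;> rcases hA 1 1 with h11 | h11 <;>
    simp [h00, h01, h10, h11, nonsingularBinary, one_fin_two, J, U, L, F, G] at hdet ⊢

lemma exists_hullCardLE_xSeq_of_binary {A B : Matrix (Fin 2) (Fin 2) ℝ}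
    (hA : ∀ i j, A i j = 0 ∨ A i j = 1) (hB : ∀ i j, B i j = 0 ∨ B i j = 1) :
    ∃ K d : ℕ, ∀ k a, HullCardLE (XSeq {A, B} a k) (K * (k + 1) ^ d) := by
  have of_singular {A : Matrix (Fin 2) (Fin 2) ℝ} (hA : A.det = 0) (B : Matrix (Fin 2) (Fin 2) ℝ) :
      ∃ K d : ℕ, ∀ k a, HullCardLE (XSeq {A, B} a k) (K * (k + 1) ^ d) := by
    obtain ⟨u, l, rfl⟩ := exists_eq_vecMulVec_of_det_eq_zero hA
    exact ⟨2, 1, fun k a =>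
      (hullCardLE_xSeq_vecMulVec_pair u l B a k).mono (by rw [pow_one]; omega)⟩
  by_cases hdetA : A.det = 0
  · exact of_singular hdetA B
  by_cases hdetB : B.det = 0
  · rw [pair_comm]
    exact of_singular hdetB A
  have hA := mem_nonsingularBinary_of_det_ne_zero hA hdetA
  have hB := mem_nonsingularBinary_of_det_ne_zero hB hdetB
  exact (polyDominated_pair hA hB).exists_hullCardLE_xSeq hA hB

end OligoVertex

/-- Any pair of 2×2 binary matrices has the oligo-vertex property. -/
theorem stmt5 (A B : Matrix (Fin 2) (Fin 2) ℝ)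
    (hA : ∀ i j, A i j = 0 ∨ A i j = 1) (hB : ∀ i j, B i j = 0 ∨ B i j = 1) :
    ∃ α : ℝ, 0 < α ∧ ∃ d : ℝ, 0 < d ∧ ∃ k₀ : ℕ, ∀ k : ℕ, k₀ ≤ k →
      ∀ a : Fin 2 → ℝ, (NExt {A, B} a k : ℝ) ≤ α * (k : ℝ) ^ d := by
  obtain ⟨K, d, hull⟩ := OligoVertex.exists_hullCardLE_xSeq_of_binary hA hB
  refine ⟨(K + 1) * 2 ^ (d + 1), by positivity, (d + 1 : ℕ), by positivity, 1, fun k hk a => ?_⟩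
  have bound : NExt {A, B} a k ≤ (K + 1) * 2 ^ (d + 1) * k ^ (d + 1) :=
    calc NExt {A, B} a k ≤ K * (k + 1) ^ d := (hull k a).ncard_extremePoints_le
      _ ≤ (K + 1) * (2 * k) ^ (d + 1) := by gcongr <;> omega
      _ = (K + 1) * 2 ^ (d + 1) * k ^ (d + 1) := by rw [mul_pow, mul_assoc]
  rw [Real.rpow_natCast]
  exact_mod_cast bound

end
end

section
/- There exist a real number α > 0 and a natural number k₀ such that for every integer k ≥ k₀ and every a ∈ ℝ², N_k(Σ₁, a) ≤ α·k⁴, where Σ₁ = {A₁, A₂}. -/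
/-!
Every extreme point of `P_k` is the unique maximizer over `X_k` of a linear functional `c`, and such
points are counted according to the signs of `c` and of `a`.

Let first `a ≥ 0`. If `c ≥ 0`, only words whose matrix is maximal in the entrywise order matter.
A word is essentially a product of blocks `A₂ ^ m * A₁`, which is a matrix of continuants.
Exhibiting entrywise larger products of the same length shows that in a maximal word all exponents
`m` are `3`, up to a bounded number of defects separating at most two runs of `3`s, which leaves
`O(k)` words. If `c ≤ 0`, two occurrences of `A₂` can be replaced by two cancelling occurrences of
`A₁`, so words with at most one `A₂` suffice, and these are `O(k)` many. If the coordinates of `c`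
have opposite signs, the last letter of an optimal word is known up to one exceptional word; moving
this letter from the word to the functional gives a recursion in `k` with solution `O(k²)`.

For general `a`, at least one of `A₂ a` and `A₂ A₁ a` has no two coordinates of opposite signs, so
that the starting vectors not covered so far form, up to `A₁`, a single sequence: a subtractive
Euclidean algorithm, which is left at one vector per step. With `O(k²)` choices for the step and for
the number of letters still to be applied, and `O(k²)` points for each choice, this gives `O(k⁴)`.
-/

open Matrix Set

noncomputable section

def M1 : Matrix (Fin 2) (Fin 2) ℝ := !![0, 1; 1, 0]
def M2 : Matrix (Fin 2) (Fin 2) ℝ := !![1, 1; 0, 1]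
def M3 : Matrix (Fin 2) (Fin 2) ℝ := !![1, 0; 1, 1]
def M4 : Matrix (Fin 2) (Fin 2) ℝ := !![1, 1; 1, 0]
def M5 : Matrix (Fin 2) (Fin 2) ℝ := !![0, 1; 1, 1]

section ExposedPoints

variable {ι : Type*} [Fintype ι] {C D X Y B : Set (ι → ℝ)} {v : ι → ℝ}

/-- The points of `X` at which some functional `x ↦ c ⬝ᵥ x` with `c ∈ C` attains its maximum
over `X`, and attains it nowhere else. For `C = univ` these are the exposed points of `X`. -/
def exposedBy (C X : Set (ι → ℝ)) : Set (ι → ℝ) :=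
  {v | v ∈ X ∧ ∃ c ∈ C, ∀ x ∈ X, c ⬝ᵥ v ≤ c ⬝ᵥ x → x = v}

lemma exposedBy_subset : exposedBy C X ⊆ X := fun _ hv => hv.1

lemma exposedBy_mono_left (h : C ⊆ D) : exposedBy C X ⊆ exposedBy D X := by
  rintro v ⟨hv, c, hc, hmax⟩
  exact ⟨hv, c, h hc, hmax⟩

lemma exposedBy_union_left : exposedBy (C ∪ D) X = exposedBy C X ∪ exposedBy D X := by
  refine Set.Subset.antisymm ?_
    (union_subset (exposedBy_mono_left subset_union_left) (exposedBy_mono_left subset_union_right))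
  rintro v ⟨hv, c, hc | hc, hmax⟩
  · exact Or.inl ⟨hv, c, hc, hmax⟩
  · exact Or.inr ⟨hv, c, hc, hmax⟩

lemma mem_exposedBy_of_subset (hYX : Y ⊆ X) (hv : v ∈ exposedBy C X) (hvY : v ∈ Y) :
    v ∈ exposedBy C Y := by
  obtain ⟨-, c, hc, hmax⟩ := hv
  exact ⟨hvY, c, hc, fun x hx => hmax x (hYX hx)⟩

lemma exposedBy_subset_of_forall_exists_le (hBX : B ⊆ X)
    (h : ∀ x ∈ X, ∃ y ∈ B, ∀ c ∈ C, c ⬝ᵥ x ≤ c ⬝ᵥ y) : exposedBy C X ⊆ B := by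
  rintro v ⟨hv, c, hc, hmax⟩
  obtain ⟨y, hy, hle⟩ := h v hv
  rwa [← hmax y (hBX hy) (hle c hc)]

lemma exposedBy_image_mulVec_subset {A : Matrix ι ι ℝ} (hA : Function.Injective A.mulVec) :
    exposedBy C (A.mulVec '' X) ⊆ A.mulVec '' exposedBy ((· ᵥ* A) '' C) X := by
  rintro _ ⟨⟨x, hx, rfl⟩, c, hc, hmax⟩
  refine ⟨x, ⟨hx, _, mem_image_of_mem _ hc, fun y hy hle => hA ?_⟩, rfl⟩
  rw [← dotProduct_mulVec, ← dotProduct_mulVec] at hle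
  exact hmax _ (mem_image_of_mem _ hy) hle

lemma exposedBy_univ_image_neg : exposedBy univ ((-·) '' X) ⊆ (-·) '' exposedBy univ X := by
  rintro _ ⟨⟨x, hx, rfl⟩, c, -, hmax⟩
  refine ⟨x, ⟨hx, -c, mem_univ _, fun y hy hle => neg_injective ?_⟩, rfl⟩
  refine hmax _ (mem_image_of_mem _ hy) ?_
  simpa using hle

lemma extremePoints_convexHull_subset_exposedBy_univ (hX : X.Finite) :
    (convexHull ℝ X).extremePoints ℝ ⊆ exposedBy univ X := by
  classical
  intro v hv
  have hnot : v ∉ convexHull ℝ (X \ {v}) := fun h =>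
    ((convex_convexHull ℝ X).mem_extremePoints_iff_mem_sdiff_convexHull_sdiff.1 hv).2
      (convexHull_mono (sdiff_subset_sdiff_left (subset_convexHull ℝ X)) h)
  obtain ⟨f, u, hf, huv⟩ := geometric_hahn_banach_closed_point (convex_convexHull ℝ (X \ {v}))
    (hX.sdiff.isClosed_convexHull ℝ) hnot
  obtain ⟨c, hc⟩ := (dotProductEquiv ℝ ι).surjective f.toLinearMap
  have hcf (x : ι → ℝ) : c ⬝ᵥ x = f x := LinearMap.congr_fun hc x
  refine ⟨extremePoints_convexHull_subset hv, c, mem_univ _, fun x hx hle => ?_⟩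
  by_contra hne
  have hlt : f x < f v := (hf x (subset_convexHull ℝ _ ⟨hx, hne⟩)).trans huv
  rw [hcf, hcf] at hle
  exact hlt.not_ge hle

end ExposedPoints

section Orbits

variable {n : ℕ} {S : Set (Matrix (Fin n) (Fin n) ℝ)} {A : Matrix (Fin n) (Fin n) ℝ}
  {a x : Fin n → ℝ} {k : ℕ}

lemma mem_XSeq_succ : x ∈ XSeq S a (k + 1) ↔ ∃ A ∈ S, ∃ y ∈ XSeq S a k, A *ᵥ y = x := by
  simp only [XSeq, mem_iUnion, mem_image, exists_prop]

lemma mulVec_mem_XSeq (hA : A ∈ S) (hx : x ∈ XSeq S a k) : A *ᵥ x ∈ XSeq S a (k + 1) :=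
  mem_XSeq_succ.2 ⟨A, hA, x, hx, rfl⟩

lemma pow_mulVec_mem_XSeq (hA : A ∈ S) (hx : x ∈ XSeq S a k) (l : ℕ) :
    A ^ l *ᵥ x ∈ XSeq S a (k + l) := by
  induction l with
  | zero => simpa using hx
  | succ l ih =>
    rw [pow_succ', ← mulVec_mulVec]
    exact mulVec_mem_XSeq hA ih

lemma pow_mulVec_self_mem_XSeq (hA : A ∈ S) (a : Fin n → ℝ) (k : ℕ) :
    A ^ k *ᵥ a ∈ XSeq S a k := by
  simpa using pow_mulVec_mem_XSeq (k := 0) hA (mem_singleton a) k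

lemma XSeq_succ_eq_iUnion (S : Set (Matrix (Fin n) (Fin n) ℝ)) (a : Fin n → ℝ) (k : ℕ) :
    XSeq S a (k + 1) = ⋃ A ∈ S, XSeq S (A *ᵥ a) k := by
  induction k with
  | zero => simp [XSeq]
  | succ k ih =>
    ext x
    simp only [mem_XSeq_succ, ih, mem_iUnion, exists_prop]
    constructor
    · rintro ⟨B, hB, y, ⟨A, hA, hy⟩, rfl⟩
      exact ⟨A, hA, B, hB, y, hy, rfl⟩
    · rintro ⟨A, hA, B, hB, y, hy, rfl⟩
      exact ⟨B, hB, y, ⟨A, hA, hy⟩, rfl⟩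

lemma XSeq_finite (hS : S.Finite) (a : Fin n → ℝ) (k : ℕ) : (XSeq S a k).Finite := by
  induction k with
  | zero => exact finite_singleton a
  | succ k ih => exact hS.biUnion fun A _ => ih.image _

lemma XSeq_neg (S : Set (Matrix (Fin n) (Fin n) ℝ)) (a : Fin n → ℝ) (k : ℕ) :
    XSeq S (-a) k = (-·) '' XSeq S a k := by
  induction k with
  | zero => simp [XSeq]
  | succ k ih => simp only [XSeq, ih, image_iUnion, image_image, mulVec_neg]

lemma XSeq_nonneg (hS : ∀ A ∈ S, ∀ y, 0 ≤ y → 0 ≤ A *ᵥ y) (ha : 0 ≤ a)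
    (hx : x ∈ XSeq S a k) : 0 ≤ x := by
  induction k generalizing x with
  | zero => rwa [show x = a from hx]
  | succ k ih =>
    obtain ⟨A, hA, y, hy, rfl⟩ := mem_XSeq_succ.1 hx
    exact hS A hA y (ih hy)

end Orbits

section NonnegMatrices

variable {n : ℕ} {A B : Matrix (Fin n) (Fin n) ℝ} {x y : Fin n → ℝ}

lemma mulVec_le_mulVec (hA : ∀ i j, 0 ≤ A i j) (hxy : x ≤ y) : A *ᵥ x ≤ A *ᵥ y :=
  fun i => dotProduct_le_dotProduct_of_nonneg_left hxy (hA i)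

lemma mulVec_le_mulVec_right (hAB : ∀ i j, A i j ≤ B i j) (hx : 0 ≤ x) : A *ᵥ x ≤ B *ᵥ x :=
  fun i => dotProduct_le_dotProduct_of_nonneg_right (hAB i) hx

lemma mulVec_nonneg (hA : ∀ i j, 0 ≤ A i j) (hx : 0 ≤ x) : 0 ≤ A *ᵥ x :=
  fun i => dotProduct_nonneg_of_nonneg (hA i) hx

lemma mul_mul_apply_le_mul_mul_apply {P Q : Matrix (Fin n) (Fin n) ℝ} (hA : ∀ i j, 0 ≤ A i j)
    (hB : ∀ i j, 0 ≤ B i j) (hPQ : ∀ i j, P i j ≤ Q i j) (i j : Fin n) :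
    (A * P * B) i j ≤ (A * Q * B) i j := by
  simp only [mul_apply]
  gcongr with l _ m _
  exacts [hB l j, hA i m, hPQ m l]

lemma mul_apply_nonneg (hA : ∀ i j, 0 ≤ A i j) (hB : ∀ i j, 0 ≤ B i j) (i j : Fin n) :
    0 ≤ (A * B) i j :=
  dotProduct_nonneg_of_nonneg (hA i) fun l => hB l j

end NonnegMatrices

section Generators

lemma M1_mul_M1 : M1 * M1 = 1 := by
  ext i j; fin_cases i <;> fin_cases j <;> simp [M1]

lemma M2_pow (l : ℕ) : M2 ^ l = !![1, (l : ℝ); 0, 1] := by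
  induction l with
  | zero => simp [one_fin_two]
  | succ l ih => rw [pow_succ, ih, M2]; simp [add_comm]

lemma isUnit_M1 : IsUnit M1 := .of_mul_eq_one _ M1_mul_M1

lemma isUnit_M2 : IsUnit M2 := by
  simp [isUnit_iff_isUnit_det, M2, det_fin_two]

lemma M1_apply_nonneg (i j : Fin 2) : 0 ≤ M1 i j := by
  fin_cases i <;> fin_cases j <;> simp [M1]

lemma M2_apply_nonneg (i j : Fin 2) : 0 ≤ M2 i j := by
  fin_cases i <;> fin_cases j <;> simp [M2]

lemma M1_mulVec (x : Fin 2 → ℝ) : M1 *ᵥ x = ![x 1, x 0] := by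
  ext i; fin_cases i <;> simp [M1, mulVec, dotProduct]

lemma M2_pow_mulVec (l : ℕ) (x : Fin 2 → ℝ) : M2 ^ l *ᵥ x = ![x 0 + l * x 1, x 1] := by
  ext i; fin_cases i <;> simp [M2_pow, mulVec, dotProduct]

lemma M2_mulVec (x : Fin 2 → ℝ) : M2 *ᵥ x = ![x 0 + x 1, x 1] := by
  simpa using M2_pow_mulVec 1 x

lemma vecMul_M1 (c : Fin 2 → ℝ) : c ᵥ* M1 = ![c 1, c 0] := by
  ext i; fin_cases i <;> simp [M1, vecMul, dotProduct]

lemma vecMul_M2 (c : Fin 2 → ℝ) : c ᵥ* M2 = ![c 0, c 0 + c 1] := by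
  ext i; fin_cases i <;> simp [M2, vecMul, dotProduct]

lemma M1_mulVec_M1_mulVec (b : Fin 2 → ℝ) : M1 *ᵥ M1 *ᵥ b = b := by
  rw [mulVec_mulVec, M1_mul_M1, one_mulVec]

lemma M2_pow_mul_M1 (m : ℕ) : M2 ^ m * M1 = !![(m : ℝ), 1; 1, 0] := by
  simp [M2_pow, M1]

end Generators

section Blocks

variable {L L' : List ℕ}

/-- The product of the blocks `M2 ^ m * M1 = !![m, 1; 1, 0]`, for `m` running through `L`. It is
the matrix of continuants of the continued fraction with partial quotients `L`. -/
def blockProd (L : List ℕ) : Matrix (Fin 2) (Fin 2) ℝ :=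
  (L.map fun m : ℕ => !![(m : ℝ), 1; 1, 0]).prod

/-- The number of generators spelled out by `blockProd L`, a block `M2 ^ m * M1` having `m + 1`. -/
def blockLength (L : List ℕ) : ℕ :=
  (L.map (· + 1)).sum

@[simp] lemma blockProd_nil : blockProd [] = 1 := rfl

@[simp] lemma blockProd_cons (m : ℕ) (L : List ℕ) :
    blockProd (m :: L) = !![(m : ℝ), 1; 1, 0] * blockProd L := by
  simp [blockProd]

@[simp] lemma blockProd_append (L L' : List ℕ) :
    blockProd (L ++ L') = blockProd L * blockProd L' := by
  simp [blockProd]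

lemma blockProd_reverse (L : List ℕ) : blockProd L.reverse = (blockProd L)ᵀ := by
  have hsymm (m : ℕ) : !![(m : ℝ), 1; 1, 0]ᵀ = !![(m : ℝ), 1; 1, 0] := by
    ext i j; fin_cases i <;> fin_cases j <;> rfl
  simp [blockProd, transpose_list_prod, Function.comp_def, hsymm]

lemma isUnit_blockProd (L : List ℕ) : IsUnit (blockProd L) := by
  induction L with
  | nil => simp
  | cons m L ih =>
    rw [blockProd_cons]
    exact .mul (by simp [isUnit_iff_isUnit_det, det_fin_two]) ih

lemma blockProd_apply_nonneg (L : List ℕ) : ∀ i j, 0 ≤ blockProd L i j := by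
  induction L with
  | nil =>
    intro i j
    fin_cases i <;> fin_cases j <;> simp
  | cons m L ih =>
    rw [blockProd_cons]
    refine mul_apply_nonneg (fun i j => ?_) ih
    fin_cases i <;> fin_cases j <;> simp

@[simp, grind =] lemma blockLength_nil : blockLength [] = 0 := rfl

@[simp, grind =] lemma blockLength_cons (m : ℕ) (L : List ℕ) :
    blockLength (m :: L) = m + 1 + blockLength L := by
  simp [blockLength]

@[simp, grind =] lemma blockLength_append (L L' : List ℕ) :
    blockLength (L ++ L') = blockLength L + blockLength L' := by
  simp [blockLength]

@[simp, grind =] lemma blockLength_replicate (i m : ℕ) :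
    blockLength (List.replicate i m) = i * (m + 1) := by
  simp [blockLength]

@[simp, grind =]
lemma blockLength_reverse (L : List ℕ) : blockLength L.reverse = blockLength L := by
  simp [blockLength]

lemma length_le_blockLength (L : List ℕ) : L.length ≤ blockLength L := by
  induction L with
  | nil => simp
  | cons m L ih => grind

lemma le_blockLength_of_mem {m : ℕ} (hm : m ∈ L) : m ≤ blockLength L := by
  obtain ⟨s, t, rfl⟩ := List.append_of_mem hm
  grind

lemma finite_setOf_length_le_of_forall_le (N B : ℕ) :
    {L : List ℕ | L.length ≤ N ∧ ∀ m ∈ L, m ≤ B}.Finite := by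
  refine ((List.finite_length_le (Fin (B + 1)) N).image (List.map Fin.val)).subset ?_
  rintro L ⟨hlen, hle⟩
  refine ⟨L.pmap (fun m hm => ⟨m, Nat.lt_succ_of_le hm⟩) hle, by simpa using hlen, ?_⟩
  simp [List.map_pmap]

lemma finite_setOf_blockLength_eq (N : ℕ) : {L | blockLength L = N}.Finite := by
  refine (finite_setOf_length_le_of_forall_le N N).subset ?_
  rintro L rfl
  exact ⟨length_le_blockLength L, fun m => le_blockLength_of_mem⟩

/-- The extra letter allows for words ending in `M2`: such a word is closed by an `M1`, which
the vector `M1 *ᵥ b` undoes. -/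
lemma exists_blockProd_of_mem_XSeq {b x : Fin 2 → ℝ} {k : ℕ} (hx : x ∈ XSeq {M1, M2} b k) :
    ∃ L, blockLength L = k + 1 ∧ x = blockProd L *ᵥ M1 *ᵥ b := by
  induction k generalizing x with
  | zero =>
    obtain rfl : x = b := hx
    refine ⟨[0], rfl, ?_⟩
    rw [blockProd_cons, ← M2_pow_mul_M1, blockProd_nil, pow_zero, one_mul, mul_one,
      M1_mulVec_M1_mulVec]
  | succ k ih =>
    obtain ⟨A, hA, y, hy, rfl⟩ := mem_XSeq_succ.1 hx
    obtain ⟨L, hL, rfl⟩ := ih hy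
    rcases hA with rfl | rfl
    · refine ⟨0 :: L, by grind, ?_⟩
      rw [blockProd_cons, ← M2_pow_mul_M1, pow_zero, one_mul, mulVec_mulVec, mulVec_mulVec]
    · obtain _ | ⟨m, L⟩ := L
      · simp at hL
      refine ⟨(m + 1) :: L, by grind, ?_⟩
      simp only [blockProd_cons, ← M2_pow_mul_M1, pow_succ', mulVec_mulVec, mul_assoc]

lemma blockProd_mulVec_mem_XSeq (b : Fin 2 → ℝ) {k : ℕ} (hL : blockLength L = k + 1) :
    blockProd L *ᵥ M1 *ᵥ b ∈ XSeq {M1, M2} b k := by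
  induction L generalizing k with
  | nil => simp at hL
  | cons m L ih =>
    rw [blockProd_cons, ← M2_pow_mul_M1, ← mulVec_mulVec, ← mulVec_mulVec]
    rw [blockLength_cons] at hL
    obtain rfl | ⟨l, hl⟩ : k = m ∨ ∃ l, blockLength L = l + 1 := by
      cases h : blockLength L <;> simp_all
    · obtain rfl : L = [] := List.length_eq_zero_iff.1 (by have := length_le_blockLength L; lia)
      rw [blockProd_nil, one_mulVec, M1_mulVec_M1_mulVec]
      exact pow_mulVec_self_mem_XSeq (by simp) b k
    · rw [show k = l + 1 + m by lia]
      exact pow_mulVec_mem_XSeq (by simp) (mulVec_mem_XSeq (by simp) (ih hl)) m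

end Blocks

section Dominant

variable {L L' : List ℕ}

/-- `L` is dominant if its matrix is maximal, in the entrywise order, among the matrices spelled
out by words of the same length. -/
def IsDominant (L : List ℕ) : Prop :=
  ∀ L', blockLength L' = blockLength L → (∀ i j, blockProd L i j ≤ blockProd L' i j) →
    blockProd L' = blockProd L

lemma exists_isDominant_ge (L : List ℕ) : ∃ L', IsDominant L' ∧
    blockLength L' = blockLength L ∧ ∀ i j, blockProd L i j ≤ blockProd L' i j := by
  obtain ⟨L', ⟨hlen, hle⟩, hmax⟩ := Set.Finite.exists_maximalFor
    (fun L' i j => blockProd L' i j)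
    {L' | blockLength L' = blockLength L ∧ ∀ i j, blockProd L i j ≤ blockProd L' i j}
    ((finite_setOf_blockLength_eq (blockLength L)).subset fun _ h => h.1)
    ⟨L, rfl, fun _ _ => le_rfl⟩
  refine ⟨L', fun P hP hL'P => ?_, hlen, hle⟩
  have hPL' := hmax ⟨hP.trans hlen, fun i j => (hle i j).trans (hL'P i j)⟩ hL'P
  ext i j
  exact le_antisymm (hPL' i j) (hL'P i j)

namespace IsDominant

lemma of_infix (h : IsDominant L) (hL' : L' <:+: L) : IsDominant L' := by
  obtain ⟨s, t, rfl⟩ := hL'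
  intro P hlen hle
  have hmul : blockProd (s ++ P ++ t) = blockProd (s ++ L' ++ t) := by
    refine h _ (by simp [hlen]) fun i j => ?_
    simp only [blockProd_append]
    exact mul_mul_apply_le_mul_mul_apply (blockProd_apply_nonneg s) (blockProd_apply_nonneg t)
      hle i j
  simp only [blockProd_append] at hmul
  exact (isUnit_blockProd s).mul_left_cancel ((isUnit_blockProd t).mul_right_cancel hmul)

lemma reverse (h : IsDominant L) : IsDominant L.reverse := by
  intro P hlen hle
  have hrev : blockProd P.reverse = blockProd L :=
    h _ (by simpa using hlen) fun i j => by simpa [blockProd_reverse] using hle j i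
  rw [blockProd_reverse, ← hrev, blockProd_reverse, transpose_transpose]

end IsDominant

lemma not_isDominant_of_eq_add {p q r s : ℝ} (hlen : blockLength L' = blockLength L)
    (h : blockProd L' = blockProd L + !![p, q; r, s]) (hp : 0 ≤ p := by positivity)
    (hq : 0 ≤ q := by positivity) (hr : 0 ≤ r := by positivity) (hs : 0 ≤ s := by positivity)
    (hpos : 0 < p + q + r + s := by positivity) : ¬ IsDominant L := by
  intro hL
  have hzero : !![p, q; r, s] = 0 := by
    refine left_eq_add.1 ((hL L' hlen fun i j => ?_).symm.trans h)
    rw [h, Matrix.add_apply]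
    refine le_add_of_nonneg_right ?_
    fin_cases i <;> fin_cases j <;> simpa
  have hp0 : p = 0 := congr_fun₂ hzero 0 0
  have hq0 : q = 0 := congr_fun₂ hzero 0 1
  have hr0 : r = 0 := congr_fun₂ hzero 1 0
  have hs0 : s = 0 := congr_fun₂ hzero 1 1
  linarith

lemma blockProd_replicate_three (i : ℕ) : ∃ x y : ℝ, 0 ≤ x ∧ 0 ≤ y ∧ 0 < x + y ∧
    blockProd (List.replicate i 3) = !![3 * x + y, x; x, y] := by
  induction i with
  | zero => exact ⟨0, 1, by simp [one_fin_two]⟩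
  | succ i ih =>
    obtain ⟨x, y, hx, hy, hxy, h⟩ := ih
    refine ⟨3 * x + y, x, by positivity, hx, by linarith, ?_⟩
    rw [List.replicate_succ, blockProd_cons, h]
    simp

lemma not_isDominant_add_five (m : ℕ) : ¬ IsDominant [m + 5] := by
  have h : blockProd [m + 2, 2] = blockProd [m + 5] + !![(m : ℝ), m + 1; 1, 1] := by
    ext i j; fin_cases i <;> fin_cases j <;> simp <;> ring
  exact not_isDominant_of_eq_add (by grind) h

lemma not_isDominant_zero (a b : ℕ) : ¬ IsDominant [a, 0, b] := by
  have h : blockProd [a + b + 2] = blockProd [a, 0, b] + !![2, 0; 0, 0] := by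
    ext i j; fin_cases i <;> fin_cases j <;> simp
  exact not_isDominant_of_eq_add (by grind) h

lemma not_isDominant_one (a b : ℕ) : ¬ IsDominant [a, 1, b] := by
  have h : blockProd [a + 1, b + 1] = blockProd [a, 1, b] + !![2, 0; 0, 0] := by
    ext i j; fin_cases i <;> fin_cases j <;> simp
    ring
  exact not_isDominant_of_eq_add (by grind) h

lemma not_isDominant_four_twos (c d : ℕ) : ¬ IsDominant [c + 1, 2, 2, 2, 2, d + 2] := by
  have h : blockProd [c + 1, 3, 3, 3, d + 2] =
      blockProd [c + 1, 2, 2, 2, 2, d + 2] +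
        !![4 * (c : ℝ) * d + 6 * c + 2 * d, 4 * (c : ℝ) + 2; 4 * (d : ℝ) + 6, 4] := by
    ext i j; fin_cases i <;> fin_cases j <;> simp <;> ring
  exact not_isDominant_of_eq_add (by grind) h

lemma not_isDominant_four_threes_four (i : ℕ) :
    ¬ IsDominant ([4] ++ List.replicate i 3 ++ [4]) := by
  obtain ⟨x, y, hx, hy, hxy, hthree⟩ := blockProd_replicate_three i
  have hpos : 0 < 4 * x + y := by linarith
  have h : blockProd ([3] ++ List.replicate i 3 ++ [2, 2]) =
      blockProd ([4] ++ List.replicate i 3 ++ [4]) +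
        !![0, 10 * x + 3 * y; 4 * x + y, 4 * x + y] := by
    ext i j; fin_cases i <;> fin_cases j <;> simp [hthree] <;> ring
  exact not_isDominant_of_eq_add (by grind) h

lemma not_isDominant_two_threes_four (c i : ℕ) :
    ¬ IsDominant ([c + 1, 2] ++ List.replicate i 3 ++ [4]) := by
  obtain ⟨x, y, hx, -, hxy, hthree⟩ := blockProd_replicate_three i
  have hpos : 0 < 3 * x + y := by linarith
  have h : blockProd ([c + 1, 3] ++ List.replicate i 3 ++ [3]) =
      blockProd ([c + 1, 2] ++ List.replicate i 3 ++ [4]) +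
        !![c * (3 * x + y), (c + 1) * (3 * x + y); 3 * x + y, 3 * x + y] := by
    ext i j; fin_cases i <;> fin_cases j <;> simp [hthree] <;> ring
  exact not_isDominant_of_eq_add (by grind) h

lemma not_isDominant_two_three_threes_two_three (c i : ℕ) :
    ¬ IsDominant ([c + 1, 2, 3] ++ List.replicate i 3 ++ [2, 3]) := by
  obtain ⟨x, y, hx, -, hxy, hthree⟩ := blockProd_replicate_three i
  have hpos : 0 < 3 * x + y := by linarith
  have h : blockProd ([c + 1, 2, 2, 3] ++ List.replicate i 3 ++ [3]) =
      blockProd ([c + 1, 2, 3] ++ List.replicate i 3 ++ [2, 3]) +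
        !![c * (3 * x + y), (c + 1) * (3 * x + y); 3 * x + y, 3 * x + y] := by
    ext i j; fin_cases i <;> fin_cases j <;> simp [hthree] <;> ring
  exact not_isDominant_of_eq_add (by grind) h

lemma not_isDominant_two_three_threes_two_two_three (c i : ℕ) :
    ¬ IsDominant ([c + 1, 2, 3] ++ List.replicate i 3 ++ [2, 2, 3]) := by
  obtain ⟨x, y, hx, -, hxy, hthree⟩ := blockProd_replicate_three i
  have hpos : 0 < 3 * x + y := by linarith
  have h : blockProd ([c + 1, 2, 2, 2, 3] ++ List.replicate i 3 ++ [3]) =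
      blockProd ([c + 1, 2, 3] ++ List.replicate i 3 ++ [2, 2, 3]) +
        !![2 * c * (3 * x + y), 2 * (c + 1) * (3 * x + y); 2 * (3 * x + y), 2 * (3 * x + y)] := by
    ext i j; fin_cases i <;> fin_cases j <;> simp [hthree] <;> ring
  exact not_isDominant_of_eq_add (by grind) h

lemma not_isDominant_two_three_threes_two_two_two_three (c i : ℕ) :
    ¬ IsDominant ([c + 1, 2, 3] ++ List.replicate i 3 ++ [2, 2, 2, 3]) := by
  obtain ⟨x, y, hx, hy, hxy, hthree⟩ := blockProd_replicate_three i
  have hpos : 0 < 49 * x + 15 * y := by linarith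
  have h : blockProd ([c + 1, 3, 3] ++ List.replicate i 3 ++ [3, 3, 3]) =
      blockProd ([c + 1, 2, 3] ++ List.replicate i 3 ++ [2, 2, 2, 3]) +
        !![c * (127 * x + 39 * y) + 26 * x + 8 * y, c * (49 * x + 15 * y) + 23 * x + 7 * y;
          127 * x + 39 * y, 49 * x + 15 * y] := by
    ext i j; fin_cases i <;> fin_cases j <;> simp [hthree] <;> ring
  exact not_isDominant_of_eq_add (by grind) h

end Dominant

section Runs

variable {α : Type*} {x y : α} {l : List α}

lemma eq_replicate_or_eq_replicate_append_cons (x : α) (l : List α) :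
    (∃ i, l = .replicate i x) ∨ ∃ i y t, y ≠ x ∧ l = .replicate i x ++ y :: t := by
  induction l with
  | nil => exact .inl ⟨0, rfl⟩
  | cons y l ih =>
    obtain rfl | hy := eq_or_ne y x
    · obtain ⟨i, rfl⟩ | ⟨i, z, t, hz, rfl⟩ := ih
      · exact .inl ⟨i + 1, rfl⟩
      · exact .inr ⟨i + 1, z, t, hz, rfl⟩
    · exact .inr ⟨0, y, l, hy, rfl⟩

lemma eq_replicate_or_eq_replicate_append_cons_of_forall (h : ∀ z ∈ l, z = x ∨ z = y) :
    ∃ i, l = .replicate i x ∨ ∃ t, l = .replicate i x ++ y :: t := by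
  obtain ⟨i, hl⟩ | ⟨i, z, t, hz, rfl⟩ := eq_replicate_or_eq_replicate_append_cons x l
  · exact ⟨i, .inl hl⟩
  · obtain rfl := (h z (by simp)).resolve_left hz
    exact ⟨i, .inr ⟨t, rfl⟩⟩

lemma exists_eq_four_runs_or_five_runs (h : ∀ z ∈ l, z = x ∨ z = y) :
    (∃ i r j s, l = .replicate i x ++ .replicate r y ++ .replicate j x ++ .replicate s y) ∨
      ∃ i r j s t, l = .replicate i x ++ .replicate (r + 1) y ++ .replicate (j + 1) x ++
        .replicate (s + 1) y ++ x :: t := by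
  obtain ⟨i, rfl | ⟨t, rfl⟩⟩ := eq_replicate_or_eq_replicate_append_cons_of_forall h
  · exact .inl ⟨i, 0, 0, 0, by simp⟩
  obtain ⟨r, rfl | ⟨t, rfl⟩⟩ := eq_replicate_or_eq_replicate_append_cons_of_forall
    (l := t) fun z hz => (h z (by simp [hz])).symm
  · exact .inl ⟨i, r + 1, 0, 0, by simp [List.replicate_succ]⟩
  obtain ⟨j, rfl | ⟨t, rfl⟩⟩ := eq_replicate_or_eq_replicate_append_cons_of_forall
    (l := t) fun z hz => h z (by simp [hz])
  · exact .inl ⟨i, r + 1, j + 1, 0, by simp [List.replicate_succ]⟩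
  obtain ⟨s, rfl | ⟨t, rfl⟩⟩ := eq_replicate_or_eq_replicate_append_cons_of_forall
    (l := t) fun z hz => (h z (by simp [hz])).symm
  · exact .inl ⟨i, r + 1, j + 1, s + 1, by simp [List.replicate_succ]⟩
  · exact .inr ⟨i, r, j, s, t, by simp [List.replicate_succ]⟩

lemma exists_infix_of_mem (hx : x ∈ l) (p q : α) : ∃ a b, [a, x, b] <:+: p :: l ++ [q] := by
  obtain ⟨s, t, rfl⟩ := List.append_of_mem hx
  obtain ⟨s', a, hs⟩ := (List.eq_nil_or_concat' (p :: s)).resolve_left (List.cons_ne_nil p s)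
  obtain ⟨b, t', ht⟩ := List.exists_cons_of_ne_nil (l := t ++ [q]) (by simp)
  refine ⟨a, b, s', t', ?_⟩
  calc s' ++ [a, x, b] ++ t' = (s' ++ [a]) ++ x :: (b :: t') := by simp
    _ = p :: (s ++ x :: t) ++ [q] := by rw [← hs, ← ht]; simp

end Runs

lemma not_isDominant_two_threes_twos_three {u : List ℕ} {s : ℕ} (j : ℕ) (hu : u ≠ [])
    (hu1 : ∀ x ∈ u, 1 ≤ x) (hs : s ≤ 2) :
    ¬ IsDominant (u ++ 2 :: .replicate (j + 1) 3 ++ .replicate (s + 1) 2 ++ [3]) := by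
  intro h
  obtain ⟨v, c, rfl⟩ := (List.eq_nil_or_concat' u).resolve_left hu
  obtain ⟨c, rfl⟩ := Nat.exists_eq_add_of_le' (hu1 c (by simp))
  have hsub : IsDominant ([c + 1, 2, 3] ++ .replicate j 3 ++ (.replicate (s + 1) 2 ++ [3])) :=
    h.of_infix ⟨v, [], by simp [List.replicate_succ]⟩
  interval_cases s
  · exact not_isDominant_two_three_threes_two_three c j hsub
  · exact not_isDominant_two_three_threes_two_two_three c j hsub
  · exact not_isDominant_two_three_threes_two_two_two_three c j hsub

namespace IsDominant

variable {L u w l t : List ℕ} {m p q r s i j x : ℕ}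

lemma le_four (h : IsDominant L) (hm : m ∈ L) : m ≤ 4 := by
  by_contra! hlt
  obtain ⟨c, rfl⟩ := Nat.exists_eq_add_of_le' hlt
  obtain ⟨s, t, rfl⟩ := List.append_of_mem hm
  exact not_isDominant_add_five c (h.of_infix ⟨s, t, by simp⟩)

lemma eq_of_mem_interior (h : IsDominant (p :: l ++ [q])) (hx : x ∈ l) :
    x = 2 ∨ x = 3 ∨ x = 4 := by
  obtain ⟨a, b, hab⟩ := exists_infix_of_mem hx p q
  have hle : x ≤ 4 := h.le_four (by simp [hx])
  have hzero : x ≠ 0 := by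
    rintro rfl
    exact not_isDominant_zero a b (h.of_infix hab)
  have hone : x ≠ 1 := by
    rintro rfl
    exact not_isDominant_one a b (h.of_infix hab)
  lia

lemma le_three_of_eq_append_twos_append (h : IsDominant L) (h2 : ∀ x ∈ L, 2 ≤ x)
    (hL : L = u ++ .replicate r 2 ++ w) (hu : u ≠ []) (hw : w ≠ []) : r ≤ 3 := by
  subst hL
  by_contra! hr
  obtain ⟨r, rfl⟩ := Nat.exists_eq_add_of_le' hr
  obtain ⟨v, c, hv⟩ := (List.eq_nil_or_concat' (u ++ .replicate r 2)).resolve_left (by simp [hu])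
  obtain ⟨d, w, rfl⟩ := List.exists_cons_of_ne_nil hw
  have hc : 2 ≤ c := by
    have hmem : c ∈ u ++ .replicate r 2 := by simp [hv]
    rcases List.mem_append.1 hmem with hc | hc
    · exact h2 c (by simp [hc])
    · exact (List.eq_of_mem_replicate hc).ge
  obtain ⟨c, rfl⟩ := Nat.exists_eq_add_of_le' (Nat.le_of_succ_le hc)
  obtain ⟨d, rfl⟩ := Nat.exists_eq_add_of_le' (h2 d (by simp))
  refine not_isDominant_four_twos c d (h.of_infix ⟨v, w, ?_⟩)
  calc v ++ [c + 1, 2, 2, 2, 2, d + 2] ++ w = v ++ [c + 1] ++ .replicate 4 2 ++ (d + 2) :: w := by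
        simp [List.replicate_succ]
    _ = u ++ .replicate (r + 4) 2 ++ (d + 2) :: w := by
        rw [← hv, List.append_assoc u, List.replicate_append_replicate]

lemma eq_replicate_three_of_four_cons (h : IsDominant (4 :: t ++ [q])) (hq : 1 ≤ q)
    (ht : ∀ x ∈ t, x = 2 ∨ x = 3 ∨ x = 4) : ∃ i, t = .replicate i 3 := by
  obtain ht3 | ⟨i, y, t, hy, rfl⟩ := eq_replicate_or_eq_replicate_append_cons 3 t
  · exact ht3
  exfalso
  obtain rfl | rfl | rfl := ht y (by simp)
  · obtain ⟨e, t', ht'⟩ := List.exists_cons_of_ne_nil (l := t ++ [q]) (by simp)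
    have he : 1 ≤ e := by
      have hmem : e ∈ t ++ [q] := by simp [ht']
      obtain he | rfl : e ∈ t ∨ e = q := by simpa using hmem
      · have := ht e (by simp [he])
        lia
      · exact hq
    obtain ⟨c, rfl⟩ := Nat.exists_eq_add_of_le' he
    have hinfix : ([c + 1, 2] ++ List.replicate i 3 ++ [4]).reverse <:+:
        4 :: (.replicate i 3 ++ 2 :: t) ++ [q] := ⟨[], t', by simp [ht']⟩
    exact not_isDominant_two_threes_four c i (by simpa using (h.of_infix hinfix).reverse)
  · exact hy rfl
  · exact not_isDominant_four_threes_four i (h.of_infix ⟨[], t ++ [q], by simp⟩)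

lemma eq_threes_four_threes (h : IsDominant (p :: l ++ [q])) (hp : 1 ≤ p) (hq : 1 ≤ q)
    (h4 : 4 ∈ l) : ∃ i j, l = .replicate i 3 ++ 4 :: .replicate j 3 := by
  obtain ⟨s, t, rfl⟩ := List.append_of_mem h4
  obtain ⟨j, rfl⟩ := eq_replicate_three_of_four_cons
    (h.of_infix (L' := 4 :: t ++ [q]) ⟨p :: s, [], by simp⟩) hq
    fun x hx => h.eq_of_mem_interior (by simp [hx])
  have hleft : IsDominant (p :: s ++ [4]) := h.of_infix ⟨[], .replicate j 3 ++ [q], by simp⟩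
  obtain ⟨i, hi⟩ := eq_replicate_three_of_four_cons (t := s.reverse) (q := p)
    (by simpa using hleft.reverse) hp fun x hx => h.eq_of_mem_interior (by simp_all)
  exact ⟨i, j, by rw [List.reverse_eq_iff.1 hi, List.reverse_replicate]⟩

lemma eq_four_runs (h : IsDominant (p :: l ++ [q])) (hp : 2 ≤ p) (hq : 2 ≤ q)
    (hl : ∀ x ∈ l, x = 3 ∨ x = 2) : ∃ i r j s, r ≤ 3 ∧ s ≤ 3 ∧
      l = .replicate i 3 ++ .replicate r 2 ++ .replicate j 3 ++ .replicate s 2 := by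
  have h2 : ∀ x ∈ p :: l ++ [q], 2 ≤ x := by grind
  obtain ⟨i, r, j, s, rfl⟩ | ⟨i, r, j, s, t, rfl⟩ := exists_eq_four_runs_or_five_runs hl
  · have hr : r ≤ 3 := h.le_three_of_eq_append_twos_append h2
      (u := p :: .replicate i 3) (w := .replicate j 3 ++ .replicate s 2 ++ [q])
      (by simp) (by simp) (by simp)
    have hs : s ≤ 3 := h.le_three_of_eq_append_twos_append h2
      (u := p :: .replicate i 3 ++ .replicate r 2 ++ .replicate j 3) (w := [q])
      (by simp) (by simp) (by simp)
    exact ⟨i, r, j, s, hr, hs, rfl⟩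
  · exfalso
    have hs : s + 1 ≤ 3 := h.le_three_of_eq_append_twos_append h2
      (u := p :: .replicate i 3 ++ .replicate (r + 1) 2 ++ .replicate (j + 1) 3)
      (w := 3 :: t ++ [q]) (by simp) (by simp) (by simp)
    refine not_isDominant_two_threes_twos_three (u := p :: .replicate i 3 ++ .replicate r 2) j
      (by simp) (by grind) (Nat.le_of_succ_le_succ hs) (h.of_infix ⟨[], t ++ [q], ?_⟩)
    simp [List.replicate_succ']

lemma exists_eq_append_threes (h : IsDominant L) : ∃ A B C i j, A.length ≤ 5 ∧ B.length ≤ 5 ∧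
    C.length ≤ 5 ∧ L = A ++ .replicate i 3 ++ B ++ .replicate j 3 ++ C := by
  obtain hlen | ⟨p, p', l, q', q, rfl⟩ :
      L.length ≤ 3 ∨ ∃ p p' l q' q, L = p :: (p' :: l ++ [q']) ++ [q] := by
    rcases L with _ | ⟨p, _ | ⟨p', L⟩⟩
    · exact .inl (by simp)
    · exact .inl (by simp)
    obtain rfl | ⟨L, q, rfl⟩ := List.eq_nil_or_concat' L
    · exact .inl (by simp)
    obtain rfl | ⟨l, q', rfl⟩ := List.eq_nil_or_concat' L
    · exact .inl (by simp)
    · exact .inr ⟨p, p', l, q', q, by simp⟩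
  · exact ⟨L, [], [], 0, 0, by lia, by simp, by simp, by simp⟩
  have hp' := h.eq_of_mem_interior (x := p') (by simp)
  have hq' := h.eq_of_mem_interior (x := q') (by simp)
  have hl {x : ℕ} (hx : x ∈ l) := h.eq_of_mem_interior (x := x) (by simp [hx])
  have hinner : IsDominant (p' :: l ++ [q']) := h.of_infix ⟨[p], [q], by simp⟩
  by_cases h4 : 4 ∈ l
  · obtain ⟨i, j, rfl⟩ := hinner.eq_threes_four_threes (by lia) (by lia) h4
    exact ⟨[p, p'], [4], [q', q], i, j, by simp, by simp, by simp, by simp⟩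
  · have hl32 : ∀ x ∈ l, x = 3 ∨ x = 2 := by grind
    obtain ⟨i, r, j, s, hr, hs, rfl⟩ := hinner.eq_four_runs (by lia) (by lia) hl32
    exact ⟨[p, p'], .replicate r 2, .replicate s 2 ++ [q', q], i, j, by simp, by simp; lia,
      by simp; lia, by simp⟩

end IsDominant

lemma exists_encard_setOf_isDominant_le : ∃ G : ℕ, ∀ k : ℕ,
    {L | blockLength L = k + 1 ∧ IsDominant L}.encard ≤ (G * (k + 1) : ℕ) := by
  have hfin := finite_setOf_length_le_of_forall_le 5 4
  set W := {L : List ℕ | L.length ≤ 5 ∧ ∀ m ∈ L, m ≤ 4}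
  refine ⟨W.ncard ^ 3, fun k => ?_⟩
  let glue : (List ℕ × List ℕ × List ℕ) × ℕ → List ℕ := fun ⟨⟨A, B, C⟩, i⟩ =>
    A ++ .replicate i 3 ++ B ++
      .replicate ((k + 1 - blockLength A - 4 * i - blockLength B - blockLength C) / 4) 3 ++ C
  have hsub : {L | blockLength L = k + 1 ∧ IsDominant L} ⊆
      glue '' ((W ×ˢ W ×ˢ W) ×ˢ Iio (k + 1)) := by
    rintro L ⟨hlen, hL⟩
    obtain ⟨A, B, C, i, j, hA, hB, hC, rfl⟩ := hL.exists_eq_append_threes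
    simp only [blockLength_append, blockLength_replicate] at hlen
    refine ⟨⟨⟨A, B, C⟩, i⟩, ⟨⟨⟨hA, ?_⟩, ⟨hB, ?_⟩, ⟨hC, ?_⟩⟩, ?_⟩, ?_⟩
    iterate 3 exact fun m hm => hL.le_four (by simp [hm])
    · rw [mem_Iio]
      lia
    · -- The second run of threes is determined by the total length.
      simp only [glue]
      rw [show (k + 1 - blockLength A - 4 * i - blockLength B - blockLength C) / 4 = j by lia]
  calc _ ≤ (glue '' ((W ×ˢ W ×ˢ W) ×ˢ Iio (k + 1))).encard := encard_le_encard hsub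
    _ ≤ ((W ×ˢ W ×ˢ W) ×ˢ Iio (k + 1)).encard := encard_image_le _ _
    _ = (W.ncard ^ 3 * (k + 1) : ℕ) := by
      rw [encard_prod, encard_prod, encard_prod, ← hfin.cast_ncard_eq,
        ← (finite_Iio (k + 1)).cast_ncard_eq, ncard_Iio_nat]
      push_cast
      ring

section NonnegStart

/-- The functionals that are increasing in the first and decreasing in the second coordinate. -/
def fourthQuadrant : Set (Fin 2 → ℝ) := {c | 0 ≤ c 0 ∧ c 1 ≤ 0}

/-- The functionals that are decreasing in the first and increasing in the second coordinate. -/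
def secondQuadrant : Set (Fin 2 → ℝ) := {c | c 0 ≤ 0 ∧ 0 ≤ c 1}

variable {b x : Fin 2 → ℝ} {k : ℕ}

lemma nonneg_of_mem_XSeq_pair (hb : 0 ≤ b) (hx : x ∈ XSeq {M1, M2} b k) : 0 ≤ x := by
  refine XSeq_nonneg ?_ hb hx
  rintro A (rfl | rfl) y hy
  exacts [mulVec_nonneg M1_apply_nonneg hy, mulVec_nonneg M2_apply_nonneg hy]

lemma le_M2_mulVec (hx : 0 ≤ x) : x ≤ M2 *ᵥ x := by
  rw [M2_mulVec, Pi.le_def, Fin.forall_fin_two]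
  exact ⟨le_add_of_nonneg_right (hx 1), le_rfl⟩

lemma M1_pow_apply_nonneg (l : ℕ) : ∀ i j, 0 ≤ (M1 ^ l) i j := by
  induction l with
  | zero => intro i j; fin_cases i <;> fin_cases j <;> simp
  | succ l ih => rw [pow_succ]; exact mul_apply_nonneg ih M1_apply_nonneg

lemma exposedBy_Ici_XSeq_subset (hb : 0 ≤ b) (k : ℕ) :
    exposedBy (Ici 0) (XSeq {M1, M2} b k) ⊆
      (fun L => blockProd L *ᵥ M1 *ᵥ b) '' {L | blockLength L = k + 1 ∧ IsDominant L} := by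
  refine exposedBy_subset_of_forall_exists_le ?_ fun x hx => ?_
  · rintro _ ⟨L, ⟨hL, -⟩, rfl⟩
    exact blockProd_mulVec_mem_XSeq b hL
  · obtain ⟨L, hL, rfl⟩ := exists_blockProd_of_mem_XSeq hx
    obtain ⟨L', hdom, hlen, hle⟩ := exists_isDominant_ge L
    refine ⟨_, ⟨L', ⟨hlen.trans hL, hdom⟩, rfl⟩, fun c hc => ?_⟩
    exact dotProduct_le_dotProduct_of_nonneg_left
      (mulVec_le_mulVec_right hle (mulVec_nonneg M1_apply_nonneg hb)) hc

lemma exists_encard_exposedBy_Ici_XSeq_le : ∃ G : ℕ, ∀ b : Fin 2 → ℝ, 0 ≤ b → ∀ k : ℕ,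
    (exposedBy (Ici 0) (XSeq {M1, M2} b k)).encard ≤ (G * (k + 1) : ℕ) := by
  obtain ⟨G, hG⟩ := exists_encard_setOf_isDominant_le
  exact ⟨G, fun b hb k => (encard_le_encard (exposedBy_Ici_XSeq_subset hb k)).trans
    ((encard_image_le _ _).trans (hG k))⟩

/-- `M2` does not decrease nonnegative vectors and `M1` is an involution, so that two occurrences
of `M2` in a word may be replaced by two cancelling occurrences of `M1`. -/
lemma exists_le_of_mem_XSeq (hb : 0 ≤ b) (hx : x ∈ XSeq {M1, M2} b k) :
    ∃ y ≤ x, y = M1 ^ k *ᵥ b ∨ ∃ i j, i + j + 1 = k ∧ y = M1 ^ i *ᵥ M2 *ᵥ M1 ^ j *ᵥ b := by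
  induction k generalizing x with
  | zero => exact ⟨b, (show x = b from hx).ge, by simp⟩
  | succ k ih =>
    obtain ⟨A, hA, z, hz, rfl⟩ := mem_XSeq_succ.1 hx
    obtain ⟨y, hyz, hy⟩ := ih hz
    obtain rfl | rfl := hA
    · refine ⟨M1 *ᵥ y, mulVec_le_mulVec M1_apply_nonneg hyz, ?_⟩
      obtain rfl | ⟨i, j, rfl, rfl⟩ := hy
      · exact .inl (by rw [pow_succ', mulVec_mulVec])
      · exact .inr ⟨i + 1, j, by lia, by simp only [pow_succ', mulVec_mulVec, mul_assoc]⟩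
    · obtain rfl | ⟨i, j, rfl, rfl⟩ := hy
      · exact ⟨_, mulVec_le_mulVec M2_apply_nonneg hyz, .inr ⟨0, k, by lia, by simp⟩⟩
      · refine ⟨M1 ^ (i + j + 1 + 1) *ᵥ b, ?_, .inl rfl⟩
        have hMb : 0 ≤ M1 ^ j *ᵥ b := mulVec_nonneg (M1_pow_apply_nonneg j) hb
        calc M1 ^ (i + j + 1 + 1) *ᵥ b = M1 ^ i *ᵥ M1 ^ j *ᵥ b := by
              rw [pow_succ, pow_succ, mul_assoc, M1_mul_M1, mul_one, pow_add, mulVec_mulVec]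
          _ ≤ M1 ^ i *ᵥ M2 *ᵥ M1 ^ j *ᵥ b :=
              mulVec_le_mulVec (M1_pow_apply_nonneg i) (le_M2_mulVec hMb)
          _ ≤ z := hyz
          _ ≤ M2 *ᵥ z := le_M2_mulVec (nonneg_of_mem_XSeq_pair hb hz)

lemma encard_exposedBy_Iic_XSeq_le (hb : 0 ≤ b) (k : ℕ) :
    (exposedBy (Iic 0) (XSeq {M1, M2} b k)).encard ≤ (k + 1 : ℕ) := by
  let y (i : ℕ) : Fin 2 → ℝ := M1 ^ i *ᵥ M2 *ᵥ M1 ^ (k - 1 - i) *ᵥ b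
  have hsub : exposedBy (Iic 0) (XSeq {M1, M2} b k) ⊆ insert (M1 ^ k *ᵥ b) (y '' Iio k) := by
    refine exposedBy_subset_of_forall_exists_le (insert_subset ?_ ?_) fun x hx => ?_
    · exact pow_mulVec_self_mem_XSeq (by simp) b k
    · rintro _ ⟨i, hi, rfl⟩
      have hmem := pow_mulVec_mem_XSeq (S := {M1, M2}) (A := M1) (by simp) (mulVec_mem_XSeq
        (A := M2) (by simp) (pow_mulVec_self_mem_XSeq (A := M1) (by simp) b (k - 1 - i))) i
      rwa [show k - 1 - i + 1 + i = k by rw [mem_Iio] at hi; lia] at hmem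
    · obtain ⟨y', hyx, hy⟩ := exists_le_of_mem_XSeq hb hx
      refine ⟨y', ?_, fun c hc => ?_⟩
      · obtain rfl | ⟨i, j, rfl, rfl⟩ := hy
        · exact mem_insert _ _
        · refine .inr ⟨i, ?_, ?_⟩
          · rw [mem_Iio]; lia
          · simp only [y, show i + j + 1 - 1 - i = j by lia]
      · rw [← neg_le_neg_iff, ← neg_dotProduct, ← neg_dotProduct]
        exact dotProduct_le_dotProduct_of_nonneg_left hyx (neg_nonneg.2 hc)
  calc _ ≤ (insert (M1 ^ k *ᵥ b) (y '' Iio k)).encard := encard_le_encard hsub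
    _ ≤ (Iio k).encard + 1 :=
        (encard_insert_le _ _).trans (add_le_add_left (encard_image_le _ _) 1)
    _ = (k + 1 : ℕ) := by
      rw [← (finite_Iio k).cast_ncard_eq, ncard_Iio_nat, Nat.cast_add, Nat.cast_one]

lemma eq_or_exists_of_mem_XSeq (hx : x ∈ XSeq {M1, M2} b k) : x = M2 ^ k *ᵥ b ∨
    ∃ l m u, l + m + 1 = k ∧ u ∈ XSeq {M1, M2} b m ∧ x = M2 ^ l *ᵥ M1 *ᵥ u := by
  induction k generalizing x with
  | zero => exact .inl (by rw [show x = b from hx, pow_zero, one_mulVec])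
  | succ k ih =>
    obtain ⟨A, rfl | rfl, y, hy, rfl⟩ := mem_XSeq_succ.1 hx
    · exact .inr ⟨0, k, y, by lia, hy, by simp⟩
    · obtain rfl | ⟨l, m, u, rfl, hu, rfl⟩ := ih hy
      · exact .inl (by rw [pow_succ', mulVec_mulVec])
      · exact .inr ⟨l + 1, m, u, by lia, hu, by simp only [pow_succ', mulVec_mulVec, mul_assoc]⟩

lemma dotProduct_le_of_mem_fourthQuadrant {c u : Fin 2 → ℝ} (hc : c ∈ fourthQuadrant)
    (hu : 0 ≤ u) (l : ℕ) :
    c ⬝ᵥ M1 *ᵥ M2 ^ l *ᵥ M1 *ᵥ u ≤ c ⬝ᵥ M2 *ᵥ M2 ^ (l + 1) *ᵥ u := by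
  have hu0 : 0 ≤ u 0 := hu 0
  have hu1 : 0 ≤ u 1 := hu 1
  simp only [M1_mulVec, M2_mulVec, M2_pow_mulVec, cons_val_zero, cons_val_one, vec2_dotProduct]
  refine add_le_add (mul_le_mul_of_nonneg_left ?_ hc.1) (mul_le_mul_of_nonpos_left ?_ hc.2)
  · rw [add_assoc]
    exact le_add_of_nonneg_right (by positivity)
  · exact le_add_of_nonneg_right (by positivity)

lemma dotProduct_le_of_mem_secondQuadrant {c u : Fin 2 → ℝ} (hc : c ∈ secondQuadrant)
    (hu : 0 ≤ u) (l : ℕ) : c ⬝ᵥ M2 ^ l *ᵥ M1 *ᵥ u ≤ c ⬝ᵥ M1 *ᵥ M2 ^ l *ᵥ u := by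
  have hu0 : 0 ≤ u 0 := hu 0
  have hu1 : 0 ≤ u 1 := hu 1
  simp only [M1_mulVec, M2_pow_mulVec, cons_val_zero, cons_val_one, vec2_dotProduct]
  exact add_le_add
    (mul_le_mul_of_nonpos_left (le_add_of_nonneg_right (by positivity)) hc.1)
    (mul_le_mul_of_nonneg_left (le_add_of_nonneg_right (by positivity)) hc.2)

lemma vecMul_M2_image_fourthQuadrant_subset :
    (· ᵥ* M2) '' fourthQuadrant ⊆ Ici 0 ∪ fourthQuadrant := by
  rintro _ ⟨c, ⟨h0, -⟩, rfl⟩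
  simp only [vecMul_M2]
  obtain h | h := le_total 0 (c 0 + c 1)
  · refine .inl ?_
    rw [mem_Ici, Pi.le_def, Fin.forall_fin_two]
    exact ⟨h0, h⟩
  · exact .inr ⟨h0, h⟩

lemma vecMul_M1_image_secondQuadrant_subset : (· ᵥ* M1) '' secondQuadrant ⊆ fourthQuadrant := by
  rintro _ ⟨c, ⟨h0, h1⟩, rfl⟩
  simp only [vecMul_M1]
  exact ⟨h1, h0⟩

lemma exposedBy_fourthQuadrant_XSeq_succ_subset (hb : 0 ≤ b) (k : ℕ) :
    exposedBy fourthQuadrant (XSeq {M1, M2} b (k + 1)) ⊆ insert (M1 *ᵥ M2 ^ k *ᵥ b)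
      (M2.mulVec '' (exposedBy (Ici 0) (XSeq {M1, M2} b k) ∪
        exposedBy fourthQuadrant (XSeq {M1, M2} b k))) := by
  have hM2 : M2.mulVec '' XSeq {M1, M2} b k ⊆ XSeq {M1, M2} b (k + 1) := by
    rintro _ ⟨y, hy, rfl⟩
    exact mulVec_mem_XSeq (by simp) hy
  have hsub : exposedBy fourthQuadrant (XSeq {M1, M2} b (k + 1)) ⊆
      insert (M1 *ᵥ M2 ^ k *ᵥ b) (M2.mulVec '' XSeq {M1, M2} b k) := by
    refine exposedBy_subset_of_forall_exists_le (insert_subset ?_ hM2) fun x hx => ?_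
    · exact mulVec_mem_XSeq (by simp) (pow_mulVec_self_mem_XSeq (by simp) b k)
    obtain ⟨A, rfl | rfl, y, hy, rfl⟩ := mem_XSeq_succ.1 hx
    · obtain rfl | ⟨l, m, u, rfl, hu, rfl⟩ := eq_or_exists_of_mem_XSeq hy
      · exact ⟨_, mem_insert _ _, fun c _ => le_rfl⟩
      · have hu0 := nonneg_of_mem_XSeq_pair hb hu
        have hmem : M2 ^ (l + 1) *ᵥ u ∈ XSeq {M1, M2} b (l + m + 1) := by
          rw [show l + m + 1 = m + (l + 1) by lia]
          exact pow_mulVec_mem_XSeq (by simp) hu (l + 1)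
        exact ⟨_, .inr ⟨_, hmem, rfl⟩, fun c hc => dotProduct_le_of_mem_fourthQuadrant hc hu0 l⟩
    · exact ⟨_, .inr ⟨y, hy, rfl⟩, fun c _ => le_rfl⟩
  intro v hv
  obtain rfl | hv2 := hsub hv
  · exact mem_insert _ _
  · refine .inr (image_mono ?_ (exposedBy_image_mulVec_subset
      (mulVec_injective_of_isUnit isUnit_M2) (mem_exposedBy_of_subset hM2 hv hv2)))
    rw [← exposedBy_union_left]
    exact exposedBy_mono_left vecMul_M2_image_fourthQuadrant_subset

lemma exposedBy_secondQuadrant_XSeq_succ_subset (hb : 0 ≤ b) (k : ℕ) :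
    exposedBy secondQuadrant (XSeq {M1, M2} b (k + 1)) ⊆ insert (M2 ^ (k + 1) *ᵥ b)
      (M1.mulVec '' exposedBy fourthQuadrant (XSeq {M1, M2} b k)) := by
  have hM1 : M1.mulVec '' XSeq {M1, M2} b k ⊆ XSeq {M1, M2} b (k + 1) := by
    rintro _ ⟨y, hy, rfl⟩
    exact mulVec_mem_XSeq (by simp) hy
  have hsub : exposedBy secondQuadrant (XSeq {M1, M2} b (k + 1)) ⊆
      insert (M2 ^ (k + 1) *ᵥ b) (M1.mulVec '' XSeq {M1, M2} b k) := by
    refine exposedBy_subset_of_forall_exists_le (insert_subset ?_ hM1) fun x hx => ?_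
    · exact pow_mulVec_self_mem_XSeq (by simp) b (k + 1)
    obtain rfl | ⟨l, m, u, hlm, hu, rfl⟩ := eq_or_exists_of_mem_XSeq hx
    · exact ⟨_, mem_insert _ _, fun c _ => le_rfl⟩
    · have hu0 := nonneg_of_mem_XSeq_pair hb hu
      have hmem : M2 ^ l *ᵥ u ∈ XSeq {M1, M2} b k := by
        rw [show k = m + l by lia]
        exact pow_mulVec_mem_XSeq (by simp) hu l
      exact ⟨_, .inr ⟨_, hmem, rfl⟩, fun c hc => dotProduct_le_of_mem_secondQuadrant hc hu0 l⟩
  intro v hv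
  obtain rfl | hv1 := hsub hv
  · exact mem_insert _ _
  · exact .inr (image_mono (exposedBy_mono_left vecMul_M1_image_secondQuadrant_subset)
      (exposedBy_image_mulVec_subset (mulVec_injective_of_isUnit isUnit_M1)
        (mem_exposedBy_of_subset hM1 hv hv1)))

lemma encard_exposedBy_fourthQuadrant_XSeq_le {G : ℕ} (hb : 0 ≤ b)
    (hG : ∀ k, (exposedBy (Ici 0) (XSeq {M1, M2} b k)).encard ≤ (G * (k + 1) : ℕ)) (k : ℕ) :
    (exposedBy fourthQuadrant (XSeq {M1, M2} b k)).encard ≤ ((G + 1) * (k + 1) ^ 2 : ℕ) := by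
  induction k with
  | zero =>
    refine (encard_le_encard exposedBy_subset).trans ?_
    rw [XSeq, encard_singleton]
    norm_cast
    lia
  | succ k ih =>
    calc _ ≤ (exposedBy (Ici 0) (XSeq {M1, M2} b k)).encard +
          (exposedBy fourthQuadrant (XSeq {M1, M2} b k)).encard + 1 :=
        (encard_le_encard (exposedBy_fourthQuadrant_XSeq_succ_subset hb k)).trans <|
          (encard_insert_le _ _).trans <| by
            gcongr
            exact (encard_image_le _ _).trans (encard_union_le _ _)
      _ ≤ (G * (k + 1) : ℕ) + ((G + 1) * (k + 1) ^ 2 : ℕ) + 1 := by gcongr; exact hG k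
      _ ≤ ((G + 1) * (k + 1 + 1) ^ 2 : ℕ) := by
        norm_cast
        nlinarith

lemma encard_exposedBy_secondQuadrant_XSeq_le {N : ℕ} (hb : 0 ≤ b)
    (hN : ∀ k, (exposedBy fourthQuadrant (XSeq {M1, M2} b k)).encard ≤ (N * (k + 1) ^ 2 : ℕ))
    (k : ℕ) :
    (exposedBy secondQuadrant (XSeq {M1, M2} b k)).encard ≤ ((N + 1) * (k + 1) ^ 2 : ℕ) := by
  cases k with
  | zero =>
    refine (encard_le_encard exposedBy_subset).trans ?_
    rw [XSeq, encard_singleton]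
    norm_cast
    lia
  | succ k =>
    calc _ ≤ (exposedBy fourthQuadrant (XSeq {M1, M2} b k)).encard + 1 :=
        (encard_le_encard (exposedBy_secondQuadrant_XSeq_succ_subset hb k)).trans <|
          (encard_insert_le _ _).trans (add_le_add_left (encard_image_le _ _) 1)
      _ ≤ (N * (k + 1) ^ 2 : ℕ) + 1 := by gcongr; exact hN k
      _ ≤ ((N + 1) * (k + 1 + 1) ^ 2 : ℕ) := by
        norm_cast
        have hsq : (k + 1) ^ 2 ≤ (k + 1 + 1) ^ 2 := by gcongr; lia
        nlinarith [Nat.mul_le_mul_left N hsq]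

lemma Ici_union_Iic_union_fourthQuadrant_union_secondQuadrant :
    Ici 0 ∪ Iic 0 ∪ fourthQuadrant ∪ secondQuadrant = univ := by
  refine eq_univ_of_forall fun c => ?_
  simp only [mem_union, mem_Ici, mem_Iic, Pi.le_def, Fin.forall_fin_two, fourthQuadrant,
    secondQuadrant, mem_ofPred_eq, Pi.zero_apply]
  have h0 := le_total 0 (c 0)
  have h1 := le_total 0 (c 1)
  tauto

lemma exists_encard_exposedBy_univ_XSeq_le_of_nonneg_or_nonpos : ∃ K : ℕ, ∀ b : Fin 2 → ℝ,
    0 ≤ b ∨ b ≤ 0 → ∀ k, (exposedBy univ (XSeq {M1, M2} b k)).encard ≤ (K * (k + 1) ^ 2 : ℕ) := by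
  obtain ⟨G, hG⟩ := exists_encard_exposedBy_Ici_XSeq_le
  have hpos (b : Fin 2 → ℝ) (hb : 0 ≤ b) (k : ℕ) :
      (exposedBy univ (XSeq {M1, M2} b k)).encard ≤ ((3 * G + 4) * (k + 1) ^ 2 : ℕ) := by
    have h4 := encard_exposedBy_fourthQuadrant_XSeq_le hb (hG b hb)
    have h2 := encard_exposedBy_secondQuadrant_XSeq_le hb h4
    rw [← Ici_union_Iic_union_fourthQuadrant_union_secondQuadrant]
    simp only [exposedBy_union_left]
    calc _ ≤ ((G * (k + 1) : ℕ) : ℕ∞) + (k + 1 : ℕ) + ((G + 1) * (k + 1) ^ 2 : ℕ) +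
          ((G + 1 + 1) * (k + 1) ^ 2 : ℕ) := by
          refine (encard_union_le _ _).trans (add_le_add ?_ (h2 k))
          refine (encard_union_le _ _).trans (add_le_add ?_ (h4 k))
          exact (encard_union_le _ _).trans
            (add_le_add (hG b hb k) (encard_exposedBy_Iic_XSeq_le hb k))
      _ ≤ ((3 * G + 4) * (k + 1) ^ 2 : ℕ) := by
        norm_cast
        have hsq : k + 1 ≤ (k + 1) ^ 2 := Nat.le_self_pow two_ne_zero _
        nlinarith [Nat.mul_le_mul_left G hsq]
  refine ⟨3 * G + 4, fun b hb k => ?_⟩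
  obtain hb | hb := hb
  · exact hpos b hb k
  · rw [← neg_neg b, XSeq_neg]
    exact (encard_le_encard exposedBy_univ_image_neg).trans
      ((encard_image_le _ _).trans (hpos (-b) (neg_nonneg.2 hb) k))

end NonnegStart

lemma encard_biUnion_le_card_nsmul {ι α : Type*} (t : Finset ι) {s : ι → Set α} {N : ℕ∞}
    (h : ∀ i ∈ t, (s i).encard ≤ N) : (⋃ i ∈ t, s i).encard ≤ t.card • N :=
  (t.set_encard_biUnion_le s).trans (t.sum_le_card_nsmul _ N h)

section ExposedFrom

variable {n : ℕ} {S : Set (Matrix (Fin n) (Fin n) ℝ)} {B B' : Set (Fin n → ℝ)} {k : ℕ}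

/-- The exposed points of `XSeq S b k`, collected over all starting vectors `b ∈ B`. -/
def exposedFrom (S : Set (Matrix (Fin n) (Fin n) ℝ)) (B : Set (Fin n → ℝ)) (k : ℕ) :
    Set (Fin n → ℝ) :=
  ⋃ b ∈ B, exposedBy univ (XSeq S b k)

lemma exposedFrom_singleton (S : Set (Matrix (Fin n) (Fin n) ℝ)) (b : Fin n → ℝ) (k : ℕ) :
    exposedFrom S {b} k = exposedBy univ (XSeq S b k) :=
  biUnion_singleton _ _

lemma exposedFrom_mono (h : B ⊆ B') : exposedFrom S B k ⊆ exposedFrom S B' k :=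
  biUnion_subset_biUnion_left h

lemma exposedFrom_union : exposedFrom S (B ∪ B') k = exposedFrom S B k ∪ exposedFrom S B' k :=
  biUnion_union _ _ _

lemma exposedFrom_zero_subset : exposedFrom S B 0 ⊆ B :=
  iUnion₂_subset fun _ hb => exposedBy_subset.trans (singleton_subset_iff.2 hb)

lemma exposedFrom_succ_subset :
    exposedFrom S B (k + 1) ⊆ exposedFrom S (⋃ A ∈ S, A.mulVec '' B) k := by
  refine iUnion₂_subset fun b hb v hv => ?_
  have hmem : v ∈ ⋃ A ∈ S, XSeq S (A *ᵥ b) k := XSeq_succ_eq_iUnion S b k ▸ exposedBy_subset hv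
  obtain ⟨A, hA, hvA⟩ := mem_iUnion₂.1 hmem
  refine mem_iUnion₂.2 ⟨A *ᵥ b, mem_biUnion hA (mem_image_of_mem _ hb), ?_⟩
  refine mem_exposedBy_of_subset ?_ hv hvA
  rw [XSeq_succ_eq_iUnion]
  exact subset_biUnion_of_mem (u := fun A => XSeq S (A *ᵥ b) k) hA

end ExposedFrom

section EuclideanAlgorithm

lemma nonneg_or_nonpos_iff_mul_nonneg {x : Fin 2 → ℝ} : 0 ≤ x ∨ x ≤ 0 ↔ 0 ≤ x 0 * x 1 := by
  simp only [Pi.le_def, Fin.forall_fin_two, Pi.zero_apply, mul_nonneg_iff]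

/-- One step of the subtractive Euclidean algorithm, on the absolute values of the coordinates of
`b` when these have opposite signs. Among `M2 *ᵥ b` and `M2 *ᵥ M1 *ᵥ b` it selects the vector whose
coordinates may again have opposite signs. -/
def euclidStep (b : Fin 2 → ℝ) : Fin 2 → ℝ :=
  if 0 ≤ (b 0 + b 1) * b 1 then M2 *ᵥ M1 *ᵥ b else M2 *ᵥ b

/-- The vector among `M2 *ᵥ b` and `M2 *ᵥ M1 *ᵥ b` not selected by `euclidStep`, which has no two
coordinates of opposite signs. -/
def euclidExit (b : Fin 2 → ℝ) : Fin 2 → ℝ :=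
  if 0 ≤ (b 0 + b 1) * b 1 then M2 *ᵥ b else M2 *ᵥ M1 *ᵥ b

lemma pair_euclidStep_euclidExit (b : Fin 2 → ℝ) :
    ({euclidStep b, euclidExit b} : Set (Fin 2 → ℝ)) = {M2 *ᵥ b, M2 *ᵥ M1 *ᵥ b} := by
  rw [euclidStep, euclidExit]
  split_ifs
  exacts [pair_comm _ _, rfl]

lemma euclidExit_nonneg_or_nonpos (b : Fin 2 → ℝ) : 0 ≤ euclidExit b ∨ euclidExit b ≤ 0 := by
  rw [nonneg_or_nonpos_iff_mul_nonneg, euclidExit]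
  split_ifs with h
  · simpa only [M2_mulVec, cons_val_zero, cons_val_one] using h
  · simp only [M2_mulVec, M1_mulVec, cons_val_zero, cons_val_one]
    nlinarith [sq_nonneg (b 0 + b 1)]

lemma exposedFrom_pair_succ_subset (b : Fin 2 → ℝ) (k : ℕ) :
    exposedFrom {M1, M2} {b, M1 *ᵥ b} (k + 1) ⊆ exposedFrom {M1, M2} {b, M1 *ᵥ b} k ∪
      (exposedFrom {M1, M2} {euclidStep b, M1 *ᵥ euclidStep b} k ∪
        exposedFrom {M1, M2} {euclidExit b} k) := by
  rw [← exposedFrom_union, ← exposedFrom_union]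
  refine exposedFrom_succ_subset.trans (exposedFrom_mono ?_)
  rw [biUnion_pair, image_pair, image_pair, M1_mulVec_M1_mulVec, ← pair_euclidStep_euclidExit,
    pair_comm]
  refine union_subset_union_right _ ?_
  rintro _ (rfl | rfl)
  exacts [.inl (mem_insert _ _), .inr rfl]

lemma exposedFrom_pair_subset_iUnion (b : Fin 2 → ℝ) (k : ℕ) :
    exposedFrom {M1, M2} {b, M1 *ᵥ b} k ⊆
      (⋃ j ∈ Finset.range (k + 1), {euclidStep^[j] b, M1 *ᵥ euclidStep^[j] b}) ∪
      ⋃ p ∈ Finset.range k ×ˢ Finset.range k,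
        exposedFrom {M1, M2} {euclidExit (euclidStep^[p.1] b)} p.2 := by
  induction k generalizing b with
  | zero => exact exposedFrom_zero_subset.trans (by simp)
  | succ k ih =>
    refine (exposedFrom_pair_succ_subset b k).trans (union_subset ?_ (union_subset ?_ ?_))
    · refine (ih b).trans (union_subset_union ?_ ?_)
      · exact biUnion_mono (by simp) fun _ _ => subset_rfl
      · exact biUnion_subset_biUnion_left (by gcongr <;> lia)
    · refine (ih (euclidStep b)).trans (union_subset_union ?_ ?_)
      · intro v hv
        obtain ⟨j, hj, hv⟩ := mem_iUnion₂.1 hv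
        exact mem_iUnion₂.2 ⟨j + 1, by simpa using hj, hv⟩
      · intro v hv
        obtain ⟨⟨j, m⟩, hjm, hv⟩ := mem_iUnion₂.1 hv
        refine mem_iUnion₂.2 ⟨(j + 1, m), ?_, hv⟩
        simp only [Finset.mem_product, Finset.mem_range] at hjm ⊢
        lia
    · intro v hv
      exact .inr (mem_iUnion₂.2 ⟨(0, k), by simp, hv⟩)

lemma exists_encard_exposedBy_univ_XSeq_le : ∃ K : ℕ, ∀ (b : Fin 2 → ℝ) (k : ℕ),
    (exposedBy univ (XSeq {M1, M2} b k)).encard ≤ (K * (k + 1) ^ 4 : ℕ) := by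
  obtain ⟨K, hK⟩ := exists_encard_exposedBy_univ_XSeq_le_of_nonneg_or_nonpos
  refine ⟨K + 2, fun b k => ?_⟩
  have hpairs : (⋃ j ∈ Finset.range (k + 1),
      ({euclidStep^[j] b, M1 *ᵥ euclidStep^[j] b} : Set (Fin 2 → ℝ))).encard ≤ (k + 1) • 2 := by
    refine (encard_biUnion_le_card_nsmul (N := 2) _ fun j _ => ?_).trans_eq (by simp)
    refine (encard_insert_le _ _).trans_eq ?_
    rw [encard_singleton, one_add_one_eq_two]
  have hexits : (⋃ p ∈ Finset.range k ×ˢ Finset.range k,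
      exposedFrom {M1, M2} {euclidExit (euclidStep^[p.1] b)} p.2).encard ≤
      (k * k) • ((K * (k + 1) ^ 2 : ℕ) : ℕ∞) := by
    refine (encard_biUnion_le_card_nsmul (N := (K * (k + 1) ^ 2 : ℕ)) _ fun p hp => ?_).trans_eq
      (by rw [Finset.card_product, Finset.card_range])
    rw [exposedFrom_singleton]
    refine (hK _ (euclidExit_nonneg_or_nonpos _) _).trans ?_
    gcongr
    exact (Finset.mem_range.1 (Finset.mem_product.1 hp).2).le
  calc _ ≤ (exposedFrom {M1, M2} {b, M1 *ᵥ b} k).encard := by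
        rw [← exposedFrom_singleton]
        exact encard_le_encard (exposedFrom_mono (by simp))
    _ ≤ (k + 1) • 2 + (k * k) • ((K * (k + 1) ^ 2 : ℕ) : ℕ∞) :=
        (encard_le_encard (exposedFrom_pair_subset_iUnion b k)).trans
          ((encard_union_le _ _).trans (add_le_add hpairs hexits))
    _ ≤ ((K + 2) * (k + 1) ^ 4 : ℕ) := by
        simp only [nsmul_eq_mul]
        norm_cast
        have hpow : k + 1 ≤ (k + 1) ^ 4 := Nat.le_self_pow four_ne_zero _
        have hk : k * k ≤ (k + 1) * (k + 1) := by gcongr <;> lia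
        calc _ ≤ (k + 1) ^ 4 * 2 + (k + 1) * (k + 1) * (K * (k + 1) ^ 2) := by gcongr
          _ = (K + 2) * (k + 1) ^ 4 := by ring

end EuclideanAlgorithm

/-- `N_k(Σ₁, a) = O(k⁴)` uniformly in `a`, where `Σ₁ = {A₁, A₂}`. -/
theorem stmt6 : ∃ α : ℝ, 0 < α ∧ ∃ k₀ : ℕ, ∀ k : ℕ, k₀ ≤ k →
    ∀ a : Fin 2 → ℝ, (NExt {M1, M2} a k : ℝ) ≤ α * (k : ℝ) ^ 4 := by
  obtain ⟨K, hK⟩ := exists_encard_exposedBy_univ_XSeq_le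
  refine ⟨(K + 1) * 2 ^ 4, by positivity, 1, fun k hk a => ?_⟩
  have hextreme : (EPts {M1, M2} a k).encard ≤ (K * (k + 1) ^ 4 : ℕ) :=
    (encard_le_encard (extremePoints_convexHull_subset_exposedBy_univ
      (XSeq_finite (toFinite _) a k))).trans (hK a k)
  have hN : NExt {M1, M2} a k ≤ K * (k + 1) ^ 4 := (encard_le_coe_iff_finite_ncard_le.1 hextreme).2
  have hk1 : (k : ℝ) + 1 ≤ 2 * k := by
    have : (1 : ℝ) ≤ k := by exact_mod_cast hk
    linarith
  calc (NExt {M1, M2} a k : ℝ) ≤ K * (k + 1) ^ 4 := by exact_mod_cast hN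
    _ ≤ (K + 1) * (2 * k) ^ 4 := by gcongr; linarith
    _ = (K + 1) * 2 ^ 4 * k ^ 4 := by ring

end
end
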